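/- Let d ∈ {xd, cd} and let L1, L2 be consistent propositional modal logics in disjoint modal signatures M1, M2 such that [L_i, S5]^d is Kripke complete (respectively, globally Kripke complete) for i = 1,2, with a shared S5 operator □_E. Then [L1, S5]^d ⊗_E [L2, S5]^d is Kripke complete (respectively, globally Kripke complete); moreover, [L1, S5]^d ⊗_E [L2, S5]^d is decidable (respectively, globally decidable) if and only if both [L1, S5]^d and [L2, S5]^d are decidable (respectively, globally decidable). -/

import Mathlib

namespace PropML

/-- propositional modal formulas over modal signature `M` -/
inductive PF (M : Type) : Type
  | atom : ℕ → PF M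
  | neg : PF M → PF M
  | and : PF M → PF M → PF M
  | box : M → PF M → PF M
  deriving DecidableEq

namespace PF

variable {M M' : Type}

def imp (φ ψ : PF M) : PF M := .neg (.and φ (.neg ψ))

def or (φ ψ : PF M) : PF M := .neg (.and (.neg φ) (.neg ψ))

def dia (m : M) (φ : PF M) : PF M := .neg (.box m (.neg φ))

/-- `⊥` -/
def bot : PF M := .and (.atom 0) (.neg (.atom 0))

/-- renaming of modal operators -/
def mapOp (f : M → M') : PF M → PF M'
  | atom n => atom n
  | neg φ => neg (mapOp f φ)
  | and φ ψ => and (mapOp f φ) (mapOp f ψ)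
  | box m φ => box (f m) (mapOp f φ)

/-- uniform substitution -/
def substP (σ : ℕ → PF M) : PF M → PF M
  | atom n => σ n
  | neg φ => neg (substP σ φ)
  | and φ ψ => and (substP σ φ) (substP σ ψ)
  | box m φ => box m (substP σ φ)

end PF

/-- evaluation treating atoms and boxed formulas as atomic; used to define
the classical tautologies of the modal language -/
def tautEval {M : Type} (v : PF M → Prop) : PF M → Prop
  | .atom n => v (.atom n)
  | .neg φ => ¬ tautEval v φ
  | .and φ ψ => tautEval v φ ∧ tautEval v ψ
  | .box m φ => v (.box m φ)

/-- classical tautologies of the propositional modal language -/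
def IsTaut {M : Type} (φ : PF M) : Prop := ∀ v, tautEval v φ

/-- a (normal) propositional modal `M`-logic -/
structure IsPLogic {M : Type} (L : Set (PF M)) : Prop where
  taut : ∀ φ, IsTaut φ → φ ∈ L
  kax : ∀ (m : M) (n k : ℕ),
    PF.imp (.box m (PF.imp (.atom n) (.atom k)))
      (PF.imp (.box m (.atom n)) (.box m (.atom k))) ∈ L
  mp : ∀ φ ψ, PF.imp φ ψ ∈ L → φ ∈ L → ψ ∈ L
  nec : ∀ m φ, φ ∈ L → PF.box m φ ∈ L
  subst : ∀ (σ : ℕ → PF M) φ, φ ∈ L → PF.substP σ φ ∈ L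

/-- A Kripke `M`-frame. -/
structure KFrame (M : Type) where
  W : Type
  ne : Nonempty W
  R : M → W → W → Prop

/-- truth of a propositional formula in a Kripke model `(F, V)` -/
def PVal {M : Type} {F : KFrame M} (V : ℕ → F.W → Prop) : PF M → F.W → Prop
  | .atom n, w => V n w
  | .neg φ, w => ¬ PVal V φ w
  | .and φ ψ, w => PVal V φ w ∧ PVal V ψ w
  | .box m φ, w => ∀ v, F.R m w v → PVal V φ v

/-- validity of a propositional formula on a frame -/
def PValid {M : Type} (F : KFrame M) (φ : PF M) : Prop :=
  ∀ (V : ℕ → F.W → Prop) (w : F.W), PVal (F := F) V φ w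

/-- `F` is a frame for the logic `L` -/
def FrameFor {M : Type} (F : KFrame M) (L : Set (PF M)) : Prop :=
  ∀ φ ∈ L, PValid F φ

/-- `L` is Kripke complete -/
def KComplete {M : Type} (L : Set (PF M)) : Prop :=
  ∀ φ, (∀ F : KFrame M, FrameFor F L → PValid F φ) → φ ∈ L

/-- global consequence `φ ⊢*_L ψ`: `ψ` is in the smallest set including
`L ∪ {φ}` closed under Modus Ponens and Necessitation -/
inductive PGlobal {M : Type} (L : Set (PF M)) (φ : PF M) : PF M → Prop
  | ax {ψ} : ψ ∈ L → PGlobal L φ ψ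
  | prem : PGlobal L φ φ
  | mp {ψ χ} : PGlobal L φ (PF.imp ψ χ) → PGlobal L φ ψ → PGlobal L φ χ
  | nec (m : M) {ψ} : PGlobal L φ ψ → PGlobal L φ (PF.box m ψ)

/-- `L` is globally Kripke complete -/
def GloballyKComplete {M : Type} (L : Set (PF M)) : Prop :=
  ∀ φ ψ, PGlobal L φ ψ ↔
    ∀ F : KFrame M, FrameFor F L → ∀ V : ℕ → F.W → Prop,
      (∀ w, PVal (F := F) V φ w) → ∀ w, PVal (F := F) V ψ w

/-- the S5 axioms for the operator `e` -/
def ContainsS5 {M : Type} (L : Set (PF M)) (e : M) : Prop :=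
  PF.imp (.box e (.atom 0)) (.atom 0) ∈ L ∧
  PF.imp (.box e (.atom 0)) (.box e (.box e (.atom 0))) ∈ L ∧
  PF.imp (PF.dia e (.atom 0)) (.box e (PF.dia e (.atom 0))) ∈ L

/-- an `(E, κ)`-homogeneous model: in each `E`-equivalence class, each formula
is satisfied either nowhere or at exactly `κ` worlds -/
def EHomog {M : Type} {F : KFrame M} (e : M) (V : ℕ → F.W → Prop)
    (κ : Cardinal) : Prop :=
  ∀ (w : F.W) (φ : PF M),
    Cardinal.mk {v : F.W // F.R e w v ∧ PVal (F := F) V φ v} = 0 ∨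
    Cardinal.mk {v : F.W // F.R e w v ∧ PVal (F := F) V φ v} = κ

/-- `L` admits `E`-homogeneous models -/
def AdmitsEHomog {M : Type} (e : M) (L : Set (PF M)) : Prop :=
  ∃ κ : Cardinal, Cardinal.aleph0 ≤ κ ∧ ∀ κ', κ ≤ κ' → ∀ φ ∉ L,
    ∃ F : KFrame M, FrameFor F L ∧ ∃ V : ℕ → F.W → Prop,
      EHomog e V κ' ∧ ∃ w, ¬ PVal (F := F) V φ w

/-- `L` admits `E`-homogeneous models for global consequence -/
def AdmitsEHomogGlobal {M : Type} (e : M) (L : Set (PF M)) : Prop :=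
  ∃ κ : Cardinal, Cardinal.aleph0 ≤ κ ∧ ∀ κ', κ ≤ κ' → ∀ φ ψ, ¬ PGlobal L φ ψ →
    ∃ F : KFrame M, FrameFor F L ∧ ∃ V : ℕ → F.W → Prop,
      EHomog e V κ' ∧ (∀ w, PVal (F := F) V φ w) ∧ ∃ w, ¬ PVal (F := F) V ψ w

/-- the fusion `L1 ⊗_E L2` of two logics sharing the S5 operator `□_E`
(designated by `none` in each component signature): the smallest propositional
modal logic in the combined language (with the single shared `□_E`) including
`L1 ∪ L2` -/
def fusionE {M1 M2 : Type} (L1 : Set (PF (Option M1))) (L2 : Set (PF (Option M2))) :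
    Set (PF (Option (M1 ⊕ M2))) :=
  ⋂₀ {L | IsPLogic L ∧
    PF.mapOp (Option.map Sum.inl) '' L1 ⊆ L ∧
    PF.mapOp (Option.map Sum.inr) '' L2 ⊆ L}

/-- the propositional modal logic `S5` (of the single operator `□_E`) -/
def S5L : Set (PF Unit) := ⋂₀ {L | IsPLogic L ∧ ContainsS5 L ()}

/-- the left commutativity axiom `□□_E p → □_E □ p` -/
def lcom {M : Type} (m : M) : PF (Option M) :=
  PF.imp (.box (some m) (.box none (.atom 0))) (.box none (.box (some m) (.atom 0)))

/-- the right commutativity axiom `□_E □ p → □ □_E p` -/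
def rcom {M : Type} (m : M) : PF (Option M) :=
  PF.imp (.box none (.box (some m) (.atom 0))) (.box (some m) (.box none (.atom 0)))

/-- the semicommutator `[L, S5]^xd = L ⊗ S5 + {lcom_□ : □ ∈ M}`
(`□_E` is `none`) -/
def LS5xd {M : Type} (L : Set (PF M)) : Set (PF (Option M)) :=
  ⋂₀ {L' | IsPLogic L' ∧
    PF.mapOp Option.some '' L ⊆ L' ∧
    PF.mapOp (fun _ => (none : Option M)) '' S5L ⊆ L' ∧
    ∀ m : M, lcom m ∈ L'}

/-- the commutator `[L, S5]^cd = [L, S5]^xd + {rcom_□ : □ ∈ M}` -/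
def LS5cd {M : Type} (L : Set (PF M)) : Set (PF (Option M)) :=
  ⋂₀ {L' | IsPLogic L' ∧ LS5xd L ⊆ L' ∧ ∀ m : M, rcom m ∈ L'}

/-- the two domain semantics: expanding (`xd`) and constant (`cd`) domains -/
inductive DSem : Type
  | xd | cd
  deriving DecidableEq

/-- `[L, S5]^d` -/
def LS5 {M : Type} (d : DSem) (L : Set (PF M)) : Set (PF (Option M)) :=
  match d with
  | .xd => LS5xd L
  | .cd => LS5cd L

/-- the fixed Gödel numbering of propositional formulas (relative to a
numbering `eM` of the modal operators) -/
def PF.encode {M : Type} (eM : M → ℕ) : PF M → ℕ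
  | .atom n => Nat.pair 0 n
  | .neg φ => Nat.pair 1 (PF.encode eM φ)
  | .and φ ψ => Nat.pair 2 (Nat.pair (PF.encode eM φ) (PF.encode eM ψ))
  | .box m φ => Nat.pair 3 (Nat.pair (eM m) (PF.encode eM φ))

/-- decidability of a propositional logic w.r.t. the fixed Gödel numbering -/
def DecidableP {M : Type} (eM : M → ℕ) (L : Set (PF M)) : Prop :=
  ComputablePred (fun n : ℕ => ∃ φ ∈ L, PF.encode eM φ = n)

/-- decidability of the global consequence relation -/
def GloballyDecidableP {M : Type} (eM : M → ℕ) (L : Set (PF M)) : Prop :=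
  ComputablePred (fun p : ℕ × ℕ =>
    ∃ φ ψ, PGlobal L φ ψ ∧ PF.encode eM φ = p.1 ∧ PF.encode eM ψ = p.2)

end PropML

namespace PropML

/-- numbering of the signature `Option M` from a numbering of `M` -/
def eOpt {M : Type} (e : M → ℕ) : Option M → ℕ :=
  fun o => match o with | none => 0 | some m => e m + 1

/-- numbering of the combined signature `Option (M1 ⊕ M2)` -/
def eOptSum {M1 M2 : Type} (e1 : M1 → ℕ) (e2 : M2 → ℕ) : Option (M1 ⊕ M2) → ℕ :=
  fun o => match o with
  | none => 0
  | some (Sum.inl m) => 2 * e1 m + 1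
  | some (Sum.inr m) => 2 * e2 m + 2

/-! Let `c` assign a fresh atom to every formula of the fusion. Replacing each subformula `□φ` with
`□` in `M2` by its atom turns a formula into its surrogate in the language of `[L1, S5]^d`, and
symmetrically for `[L2, S5]^d`, so that each component logic governs its own surrogates. What the
two sides have to agree on are the `□_E`-classes, each described by a cover: the set of state
descriptions realised in it. A formula lies outside the fusion if and only if some finite list of
covers is consistent with both components, in the sense of a certificate.

Given a certificate, take a model of the surrogates on either side and multiply it by a large set
on which `□_E` is total. Now every state realised in a class is realised equally often, and every
cover is the cover of equally many classes, so the worlds of the two models can be matched by a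
bijection that maps classes to classes and preserves states. Transporting the operators of `M2`
along it gives a frame for the fusion that refutes the formula; this proves completeness, and the
finite search for a certificate decides the fusion. Conversely, matching an arbitrary frame for
one component with a frame for the other, without regard to states, shows that the fusion is
conservative over its components, so they inherit its decidability. -/

/-! ### Semantics -/

section Semantics

variable {M M' : Type}

/-- `ev` respects the Boolean connectives, like truth at a world or `tautEval v`. -/
structure IsBoolEval (ev : PF M → Prop) : Prop where
  neg : ∀ φ, ev φ.neg ↔ ¬ ev φ
  and : ∀ φ ψ, ev (φ.and ψ) ↔ ev φ ∧ ev ψ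

theorem isBoolEval_tautEval (v : PF M → Prop) : IsBoolEval (tautEval v) :=
  ⟨fun _ => Iff.rfl, fun _ _ => Iff.rfl⟩

theorem isBoolEval_pVal {F : KFrame M} (V : ℕ → F.W → Prop) (w : F.W) :
    IsBoolEval fun φ => PVal (F := F) V φ w :=
  ⟨fun _ => Iff.rfl, fun _ _ => Iff.rfl⟩

namespace IsBoolEval

variable {ev : PF M → Prop} (h : IsBoolEval ev)
include h

theorem imp {φ ψ : PF M} : ev (φ.imp ψ) ↔ (ev φ → ev ψ) := by
  simp only [PF.imp, h.neg, h.and]; tauto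

theorem tautEval_iff (φ : PF M) : tautEval ev φ ↔ ev φ := by
  induction φ with
  | atom n => rfl
  | neg φ ih => rw [h.neg, tautEval, ih]
  | and φ ψ ihφ ihψ => rw [h.and, tautEval, ihφ, ihψ]
  | box m φ => rfl

theorem of_isTaut {φ : PF M} (hφ : IsTaut φ) : ev φ :=
  (h.tautEval_iff φ).1 (hφ ev)

end IsBoolEval

theorem isTaut_imp_self (φ : PF M) : IsTaut (φ.imp φ) :=
  fun v => (isBoolEval_tautEval v).imp.2 id

theorem pVal_imp {F : KFrame M} {V : ℕ → F.W → Prop} {w : F.W} {φ ψ : PF M} :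
    PVal (F := F) V (φ.imp ψ) w ↔ (PVal (F := F) V φ w → PVal (F := F) V ψ w) :=
  (isBoolEval_pVal V w).imp

theorem pVal_dia {F : KFrame M} {V : ℕ → F.W → Prop} {w : F.W} {m : M} {φ : PF M} :
    PVal (F := F) V (.dia m φ) w ↔ ∃ v, F.R m w v ∧ PVal (F := F) V φ v := by
  simp only [PF.dia, PVal, not_forall, not_not, exists_prop]

theorem pVal_substP {F : KFrame M} (σ : ℕ → PF M) (V : ℕ → F.W → Prop) (φ : PF M) (w : F.W) :
    PVal (F := F) V (φ.substP σ) w ↔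
      PVal (F := F) (fun n v => PVal (F := F) V (σ n) v) φ w := by
  induction φ generalizing w with
  | atom n => rfl
  | neg φ ih => exact not_congr (ih w)
  | and φ ψ ihφ ihψ => exact and_congr (ihφ w) (ihψ w)
  | box m φ ih => exact forall_congr' fun v => imp_congr Iff.rfl (ih v)

theorem isPLogic_setOf_pValid (F : KFrame M) : IsPLogic {φ | PValid F φ} where
  taut _ h V w := (isBoolEval_pVal V w).of_isTaut h
  kax _ _ _ _ _ := pVal_imp.2 fun himp =>
    pVal_imp.2 fun hbox v hv => pVal_imp.1 (himp v hv) (hbox v hv)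
  mp _ _ himp h V w := pVal_imp.1 (himp V w) (h V w)
  nec _ _ h V _ v _ := h V v
  subst σ φ h V w := (pVal_substP σ V φ w).2 (h _ w)

/-- The `M`-frame obtained from an `M'`-frame by interpreting the operator `m` as `f m`. -/
def KFrame.reduct (F : KFrame M') (f : M → M') : KFrame M :=
  ⟨F.W, F.ne, fun m => F.R (f m)⟩

theorem pVal_mapOp (F : KFrame M') (f : M → M') (V : ℕ → F.W → Prop) (φ : PF M) (w : F.W) :
    PVal (F := F) V (φ.mapOp f) w ↔ PVal (F := F.reduct f) V φ w := by
  induction φ generalizing w with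
  | atom n => rfl
  | neg φ ih => exact not_congr (ih w)
  | and φ ψ ihφ ihψ => exact and_congr (ihφ w) (ihψ w)
  | box m φ ih => exact forall_congr' fun v => imp_congr Iff.rfl (ih v)

theorem pValid_mapOp {F : KFrame M'} {f : M → M'} {φ : PF M} :
    PValid F (φ.mapOp f) ↔ PValid (F.reduct f) φ :=
  forall₂_congr fun V w => pVal_mapOp F f V φ w

/-- Bounded morphisms (p-morphisms) of Kripke frames. -/
structure IsBoundedMorphism (F G : KFrame M) (f : F.W → G.W) : Prop where
  forth : ∀ {m w v}, F.R m w v → G.R m (f w) (f v)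
  back : ∀ {m w v'}, G.R m (f w) v' → ∃ v, F.R m w v ∧ f v = v'

namespace IsBoundedMorphism

variable {F G H : KFrame M} {f : F.W → G.W} {g : G.W → H.W}

theorem comp (hg : IsBoundedMorphism G H g) (hf : IsBoundedMorphism F G f) :
    IsBoundedMorphism F H (g ∘ f) where
  forth h := hg.forth (hf.forth h)
  back h := by
    obtain ⟨_, hv', rfl⟩ := hg.back h
    obtain ⟨v, hv, rfl⟩ := hf.back hv'
    exact ⟨v, hv, rfl⟩

theorem pVal_iff (hf : IsBoundedMorphism F G f) (V : ℕ → G.W → Prop) (φ : PF M) (w : F.W) :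
    PVal (F := F) (fun n v => V n (f v)) φ w ↔ PVal (F := G) V φ (f w) := by
  induction φ generalizing w with
  | atom n => rfl
  | neg φ ih => exact not_congr (ih w)
  | and φ ψ ihφ ihψ => exact and_congr (ihφ w) (ihψ w)
  | box m φ ih =>
    refine ⟨fun hw v' hv' => ?_, fun hw v hv => (ih v).2 (hw _ (hf.forth hv))⟩
    obtain ⟨v, hv, rfl⟩ := hf.back hv'
    exact (ih v).1 (hw v hv)

end IsBoundedMorphism

theorem frameFor_of_forall_isBoundedMorphism {G : KFrame M} {L : Set (PF M)}
    (h : ∀ w : G.W, ∃ (F : KFrame M) (f : F.W → G.W),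
      FrameFor F L ∧ IsBoundedMorphism F G f ∧ w ∈ Set.range f) :
    FrameFor G L := by
  intro φ hφ V w
  obtain ⟨F, f, hF, hf, w, rfl⟩ := h w
  exact (hf.pVal_iff V φ w).1 (hF φ hφ _ w)

/-- The disjoint union of a family of frames. -/
def KFrame.sigma {I : Type} [Nonempty I] (F : I → KFrame M) : KFrame M where
  W := Σ i, (F i).W
  ne := let ⟨i⟩ := ‹Nonempty I›; let ⟨w⟩ := (F i).ne; ⟨⟨i, w⟩⟩
  R m p q := ∃ h : p.1 = q.1, (F q.1).R m (h ▸ p.2) q.2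

section Sigma

variable {I : Type} [Nonempty I] {F : I → KFrame M}

theorem isBoundedMorphism_sigmaMk (i : I) :
    IsBoundedMorphism (F i) (KFrame.sigma F) (fun w => ⟨i, w⟩) where
  forth h := ⟨rfl, h⟩
  back := by
    rintro m w ⟨j, v⟩ ⟨h : i = j, hv⟩
    subst h
    exact ⟨v, hv, rfl⟩

theorem FrameFor.sigma {L : Set (PF M)} (h : ∀ i, FrameFor (F i) L) :
    FrameFor (KFrame.sigma F) L :=
  frameFor_of_forall_isBoundedMorphism fun ⟨i, w⟩ =>
    ⟨F i, _, h i, isBoundedMorphism_sigmaMk i, w, rfl⟩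

theorem pVal_sigma (V : ∀ i, ℕ → (F i).W → Prop) (φ : PF M) (i : I) (w : (F i).W) :
    PVal (F := KFrame.sigma F) (fun n p => V p.1 n p.2) φ ⟨i, w⟩ ↔ PVal (F := F i) (V i) φ w :=
  ((isBoundedMorphism_sigmaMk i).pVal_iff (fun n p => V p.1 n p.2) φ w).symm

end Sigma

end Semantics

/-! ### Logics -/

section Logics

variable {M M' : Type}

theorem PF.mapOp_substP (f : M → M') (σ : ℕ → PF M) (φ : PF M) :
    (φ.substP σ).mapOp f = (φ.mapOp f).substP fun n => (σ n).mapOp f := by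
  induction φ <;> simp_all only [PF.substP, PF.mapOp]

theorem isBoolEval_comp_mapOp {ev : PF M' → Prop} (h : IsBoolEval ev) (f : M → M') :
    IsBoolEval fun φ : PF M => ev (φ.mapOp f) :=
  ⟨fun φ => h.neg (φ.mapOp f), fun φ ψ => h.and (φ.mapOp f) (ψ.mapOp f)⟩

namespace IsPLogic

theorem preimage_mapOp {L : Set (PF M')} (h : IsPLogic L) (f : M → M') :
    IsPLogic (PF.mapOp f ⁻¹' L) where
  taut _ hφ := h.taut _ fun v =>
    (isBoolEval_comp_mapOp (isBoolEval_tautEval v) f).of_isTaut hφ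
  kax m n k := h.kax (f m) n k
  mp _ _ himp hφ := h.mp _ _ himp hφ
  nec m _ hφ := h.nec (f m) _ hφ
  subst σ φ hφ := by
    rw [Set.mem_preimage, PF.mapOp_substP]
    exact h.subst _ _ hφ

theorem sInter {S : Set (Set (PF M))} (h : ∀ L ∈ S, IsPLogic L) : IsPLogic (⋂₀ S) where
  taut φ hφ L hL := (h L hL).taut φ hφ
  kax m n k L hL := (h L hL).kax m n k
  mp φ ψ himp hφ L hL := (h L hL).mp φ ψ (himp L hL) (hφ L hL)
  nec m φ hφ L hL := (h L hL).nec m φ (hφ L hL)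
  subst σ φ hφ L hL := (h L hL).subst σ φ (hφ L hL)

end IsPLogic

theorem isPLogic_LS5 (d : DSem) (L : Set (PF M)) : IsPLogic (LS5 d L) := by
  cases d <;> exact IsPLogic.sInter fun _ h => h.1

theorem isPLogic_fusionE {M1 M2 : Type} (L1 : Set (PF (Option M1))) (L2 : Set (PF (Option M2))) :
    IsPLogic (fusionE L1 L2) :=
  IsPLogic.sInter fun _ h => h.1

section Commutator

variable {d : DSem} {L : Set (PF M)} {L' : Set (PF (Option M))}

theorem LS5_subset (h : IsPLogic L') (hL : ∀ φ ∈ L, φ.mapOp some ∈ L')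
    (hS5 : ContainsS5 L' none) (hl : ∀ m, lcom m ∈ L') (hr : d = .cd → ∀ m, rcom m ∈ L') :
    LS5 d L ⊆ L' := by
  have hxd : LS5xd L ⊆ L' :=
    Set.sInter_subset_of_mem ⟨h, Set.image_subset_iff.2 hL, Set.image_subset_iff.2
      (Set.sInter_subset_of_mem ⟨h.preimage_mapOp _, hS5⟩), hl⟩
  cases d with
  | xd => exact hxd
  | cd => exact Set.sInter_subset_of_mem ⟨h, hxd, hr rfl⟩

theorem LS5xd_subset_LS5 : LS5xd L ⊆ LS5 d L := by
  cases d with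
  | xd => exact subset_rfl
  | cd => exact Set.subset_sInter fun _ h => h.2.1

theorem mapOp_some_mem_LS5 {φ : PF M} (hφ : φ ∈ L) : φ.mapOp some ∈ LS5 d L :=
  LS5xd_subset_LS5 fun _ h => h.2.1 ⟨φ, hφ, rfl⟩

theorem containsS5_S5L : ContainsS5 S5L () :=
  ⟨fun _ h => h.2.1, fun _ h => h.2.2.1, fun _ h => h.2.2.2⟩

theorem containsS5_LS5 : ContainsS5 (LS5 d L) none :=
  have key {φ : PF Unit} (hφ : φ ∈ S5L) : φ.mapOp (fun _ => none) ∈ LS5 d L :=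
    LS5xd_subset_LS5 fun _ h => h.2.2.1 ⟨φ, hφ, rfl⟩
  ⟨key containsS5_S5L.1, key containsS5_S5L.2.1, key containsS5_S5L.2.2⟩

theorem lcom_mem_LS5 (m : M) : lcom m ∈ LS5 d L :=
  LS5xd_subset_LS5 fun _ h => h.2.2.2 m

theorem rcom_mem_LS5 (m : M) : rcom m ∈ LS5 .cd L :=
  fun _ h => h.2.2 m

end Commutator

section Consistency

/-- The formula `φ` with all occurrences of `□_E` deleted. -/
def PF.eraseE : PF (Option M) → PF M
  | .atom n => .atom n
  | .neg φ => .neg φ.eraseE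
  | .and φ ψ => .and φ.eraseE ψ.eraseE
  | .box none φ => φ.eraseE
  | .box (some m) φ => .box m φ.eraseE

theorem PF.eraseE_substP (σ : ℕ → PF (Option M)) (φ : PF (Option M)) :
    (φ.substP σ).eraseE = φ.eraseE.substP fun n => (σ n).eraseE := by
  induction φ with
  | box m φ ih => cases m <;> simp only [PF.substP, PF.eraseE, ih]
  | _ => simp_all only [PF.substP, PF.eraseE]

theorem PF.eraseE_mapOp_some (φ : PF M) : (φ.mapOp some).eraseE = φ := by
  induction φ <;> simp_all only [PF.mapOp, PF.eraseE]

theorem isBoolEval_comp_eraseE {ev : PF M → Prop} (h : IsBoolEval ev) :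
    IsBoolEval fun φ => ev φ.eraseE :=
  ⟨fun φ => h.neg φ.eraseE, fun φ ψ => h.and φ.eraseE ψ.eraseE⟩

theorem IsPLogic.preimage_eraseE {L : Set (PF M)} (h : IsPLogic L) :
    IsPLogic (PF.eraseE ⁻¹' L) where
  taut _ hφ := h.taut _ fun v => (isBoolEval_comp_eraseE (isBoolEval_tautEval v)).of_isTaut hφ
  kax
    | none, _, _ => h.taut _ (isTaut_imp_self _)
    | some m, n, k => h.kax m n k
  mp _ _ himp hφ := h.mp _ _ himp hφ
  nec
    | none, _, hφ => hφ
    | some m, _, hφ => h.nec m _ hφ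
  subst σ φ hφ := by
    rw [Set.mem_preimage, PF.eraseE_substP]
    exact h.subst _ _ hφ

theorem LS5_subset_preimage_eraseE {d : DSem} {L : Set (PF M)} (h : IsPLogic L) :
    LS5 d L ⊆ PF.eraseE ⁻¹' L :=
  have trivial (φ : PF M) : φ.imp φ ∈ L := h.taut _ (isTaut_imp_self φ)
  LS5_subset h.preimage_eraseE
    (fun φ hφ => by rwa [Set.mem_preimage, PF.eraseE_mapOp_some])
    ⟨trivial _, trivial _, trivial _⟩ (fun _ => trivial _) (fun _ _ => trivial _)

theorem bot_notMem_LS5 {d : DSem} {L : Set (PF M)} (h : IsPLogic L) (hbot : PF.bot ∉ L) :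
    PF.bot ∉ LS5 d L :=
  fun hbot' => hbot (LS5_subset_preimage_eraseE h hbot')

end Consistency

end Logics

/-! ### Frames for commutators -/

section CommutatorFrames

variable {M : Type} {d : DSem} {L : Set (PF M)} {F : KFrame (Option M)}

/-- The first-order frame conditions expressed by the axioms that `[L, S5]^d` adds to `L`. -/
structure IsCommutatorFrame (d : DSem) (F : KFrame (Option M)) : Prop where
  equivalence : Equivalence (F.R none)
  left_comm : ∀ {m w v u}, F.R none w v → F.R (some m) v u →
    ∃ w', F.R (some m) w w' ∧ F.R none w' u
  right_comm : d = .cd → ∀ {m w v u}, F.R (some m) w v → F.R none v u →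
    ∃ v', F.R none w v' ∧ F.R (some m) v' u

theorem FrameFor.equivalence {A : Type} {F : KFrame A} {L : Set (PF A)} {e : A}
    (h : FrameFor F L) (hL : ContainsS5 L e) : Equivalence (F.R e) := by
  obtain ⟨hT, -, h5⟩ := hL
  have refl (w) : F.R e w w := pVal_imp.1 (h _ hT (fun _ v => F.R e w v) w) fun _ hv => hv
  have euclidean {w v u} (hv : F.R e w v) (hu : F.R e w u) : F.R e u v := by
    have := pVal_imp.1 (h _ h5 (fun _ x => x = v) w) (pVal_dia.2 ⟨v, hv, rfl⟩) u hu
    obtain ⟨x, hx, rfl⟩ := pVal_dia.1 this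
    exact hx
  have symm {w v} (hwv : F.R e w v) : F.R e v w := euclidean (refl w) hwv
  exact ⟨refl, symm, fun hwv hvu => euclidean (symm hwv) hvu |> symm⟩

theorem FrameFor.isCommutatorFrame (h : FrameFor F (LS5 d L)) : IsCommutatorFrame d F where
  equivalence := h.equivalence containsS5_LS5
  left_comm {m w v u} hwv hvu :=
    pVal_imp.1 (h _ (lcom_mem_LS5 m) (fun _ x => ∃ w', F.R (some m) w w' ∧ F.R none w' x) w)
      (fun w' hw' _ hx => ⟨w', hw', hx⟩) v hwv u hvu
  right_comm := by
    rintro rfl m w v u hwv hvu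
    exact pVal_imp.1
      (h _ (rcom_mem_LS5 m) (fun _ x => ∃ v', F.R none w v' ∧ F.R (some m) v' x) w)
      (fun v' hv' _ hx => ⟨v', hv', hx⟩) v hwv u hvu

theorem FrameFor.reduct_some (h : FrameFor F (LS5 d L)) : FrameFor (F.reduct some) L :=
  fun _ hφ => pValid_mapOp.1 (h _ (mapOp_some_mem_LS5 hφ))

theorem IsCommutatorFrame.frameFor (h : IsCommutatorFrame d F)
    (hL : FrameFor (F.reduct some) L) : FrameFor F (LS5 d L) := by
  refine LS5_subset (isPLogic_setOf_pValid F) (fun φ hφ => pValid_mapOp.2 (hL φ hφ))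
    ⟨fun V w => pVal_imp.2 fun hbox => hbox w (h.equivalence.refl w),
      fun V w => pVal_imp.2 fun hbox v hv u hu => hbox u (h.equivalence.trans hv hu),
      fun V w => pVal_imp.2 fun hdia u hu => ?_⟩
    (fun m V w => pVal_imp.2 fun hbox v hv u hu => ?_)
    (fun hd m V w => pVal_imp.2 fun hbox v hv u hu => ?_)
  · obtain ⟨v, hv, hv'⟩ := pVal_dia.1 hdia
    exact pVal_dia.2 ⟨v, h.equivalence.trans (h.equivalence.symm hu) hv, hv'⟩
  · obtain ⟨w', hww', hw'u⟩ := h.left_comm hv hu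
    exact hbox w' hww' u hw'u
  · obtain ⟨v', hwv', hv'u⟩ := h.right_comm hd hv hu
    exact hbox v' hwv' u hv'u

/-- The product of `F` with an equivalence relation: `□_E` moves along both coordinates, the
other operators keep the second one fixed. -/
def KFrame.prodSetoid {K : Type} [Nonempty K] (F : KFrame (Option M)) (s : Setoid K) :
    KFrame (Option M) where
  W := F.W × K
  ne := by
    have := F.ne
    infer_instance
  R
    | none, p, q => F.R none p.1 q.1 ∧ s p.2 q.2
    | some m, p, q => F.R (some m) p.1 q.1 ∧ p.2 = q.2

section ProdSetoid

variable {K : Type} [Nonempty K] (s : Setoid K)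

theorem isBoundedMorphism_fst : IsBoundedMorphism (F.prodSetoid s) F Prod.fst where
  forth {m _ _} h := by cases m <;> exact h.1
  back {m w v} h := by
    cases m with
    | none => exact ⟨(v, w.2), ⟨h, s.refl _⟩, rfl⟩
    | some m => exact ⟨(v, w.2), ⟨h, rfl⟩, rfl⟩

theorem IsCommutatorFrame.prodSetoid (h : IsCommutatorFrame d F) :
    IsCommutatorFrame d (F.prodSetoid s) where
  equivalence := ⟨fun _ => ⟨h.equivalence.refl _, s.refl _⟩,
    fun hwv => ⟨h.equivalence.symm hwv.1, s.symm hwv.2⟩,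
    fun hwv hvu => ⟨h.equivalence.trans hwv.1 hvu.1, s.trans hwv.2 hvu.2⟩⟩
  left_comm := by
    rintro m ⟨w, a⟩ ⟨v, b⟩ ⟨u, _⟩ ⟨hwv, hab⟩ ⟨hvu, rfl⟩
    obtain ⟨w', hww', hw'u⟩ := h.left_comm hwv hvu
    exact ⟨(w', a), ⟨hww', rfl⟩, ⟨hw'u, hab⟩⟩
  right_comm := by
    rintro hd m ⟨w, a⟩ ⟨v, _⟩ ⟨u, c⟩ ⟨hwv, rfl⟩ ⟨hvu, hac⟩
    obtain ⟨v', hwv', hv'u⟩ := h.right_comm hd hwv hvu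
    exact ⟨(v', c), ⟨hwv', hac⟩, ⟨hv'u, rfl⟩⟩

theorem FrameFor.prodSetoid (h : FrameFor F (LS5 d L)) :
    FrameFor (F.prodSetoid s) (LS5 d L) := by
  refine (h.isCommutatorFrame.prodSetoid s).frameFor
    (frameFor_of_forall_isBoundedMorphism fun ⟨w, a⟩ =>
      ⟨F.reduct some, fun v => (v, a), h.reduct_some, ⟨fun hwv => ⟨hwv, rfl⟩, ?_⟩, w, rfl⟩)
  rintro m w ⟨v, _⟩ ⟨hwv, rfl⟩
  exact ⟨v, hwv, rfl⟩

end ProdSetoid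

theorem frameFor_fusionE {M1 M2 : Type} {L1 : Set (PF (Option M1))} {L2 : Set (PF (Option M2))}
    {G : KFrame (Option (M1 ⊕ M2))} (h1 : FrameFor (G.reduct (Option.map Sum.inl)) L1)
    (h2 : FrameFor (G.reduct (Option.map Sum.inr)) L2) : FrameFor G (fusionE L1 L2) :=
  Set.sInter_subset_of_mem (t := {φ | PValid G φ}) ⟨isPLogic_setOf_pValid G,
    Set.image_subset_iff.2 fun φ hφ => pValid_mapOp.2 (h1 φ hφ),
    Set.image_subset_iff.2 fun φ hφ => pValid_mapOp.2 (h2 φ hφ)⟩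

end CommutatorFrames

/-! ### Gluing along `□_E`-classes -/

section Matching

open Cardinal

variable {X Y Z T : Type} {κ : Cardinal}

/-- All nonempty fibres of `f` have cardinality `κ`. -/
def HasUniformFibers (f : X → Y) (κ : Cardinal) : Prop :=
  ∀ x, #{x' // f x' = f x} = κ

theorem HasUniformFibers.comp_injective {f : X → Y} (hf : HasUniformFibers f κ) {g : Y → Z}
    (hg : Function.Injective g) : HasUniformFibers (g ∘ f) κ := fun x => by
  simpa only [Function.comp_apply, hg.eq_iff] using hf x

theorem HasUniformFibers.exists_equiv {f : X → Z} {g : Y → Z} (hf : HasUniformFibers f κ)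
    (hg : HasUniformFibers g κ) (hfg : Set.range f = Set.range g) :
    ∃ e : X ≃ Y, ∀ x, g (e x) = f x := by
  have fiber (z : Z) : Nonempty ({x // f x = z} ≃ {y // g y = z}) := by
    by_cases hz : z ∈ Set.range f
    · obtain ⟨y, hy⟩ := hfg ▸ hz
      obtain ⟨x, rfl⟩ := hz
      exact Cardinal.eq.1 ((hf x).trans (hy ▸ hg y).symm)
    · have : IsEmpty {x // f x = z} := ⟨fun x => hz ⟨x, x.2⟩⟩
      have : IsEmpty {y // g y = z} := ⟨fun y => hz (hfg ▸ ⟨y, y.2⟩)⟩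
      exact ⟨Equiv.equivOfIsEmpty _ _⟩
  have eFiber := fun z => Classical.choice (fiber z)
  refine ⟨(Equiv.sigmaFiberEquiv f).symm.trans ((Equiv.sigmaCongrRight eFiber).trans
    (Equiv.sigmaFiberEquiv g)), fun x => (eFiber (f x) ⟨x, rfl⟩).2⟩

/-- The set of labels occurring in an equivalence class. -/
def classLabels (s : Setoid X) (τ : X → T) (c : Quotient s) : Set T :=
  τ '' {x | ⟦x⟧ = c}

theorem classLabels_mk (s : Setoid X) (τ : X → T) (x : X) :
    classLabels s τ ⟦x⟧ = τ '' {y | s x y} := by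
  simp only [classLabels, Quotient.eq, s.comm' (y := x)]

theorem range_classLabels (s : Setoid X) (τ : X → T) :
    Set.range (classLabels s τ) = Set.range fun x => τ '' {y | s x y} := by
  simp only [← classLabels_mk]
  exact (Quotient.mk_surjective.range_comp (classLabels s τ)).symm

/-- Every label occurring in a class occurs there `κ` times, and every set of labels occurring
as that of a class is that of `κ` classes. -/
structure IsHomogeneous (s : Setoid X) (τ : X → T) (κ : Cardinal) : Prop where
  classes : HasUniformFibers (classLabels s τ) κ
  elements : HasUniformFibers (fun x => ((⟦x⟧ : Quotient s), τ x)) κ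

theorem IsHomogeneous.exists_equiv {s : Setoid X} {s' : Setoid Y} {τ : X → T} {τ' : Y → T}
    (hs : IsHomogeneous s τ κ) (hs' : IsHomogeneous s' τ' κ)
    (hrange : Set.range (classLabels s τ) = Set.range (classLabels s' τ')) :
    ∃ e : X ≃ Y, (∀ x, τ' (e x) = τ x) ∧ ∀ x y, s' (e x) (e y) ↔ s x y := by
  obtain ⟨eClass, heClass⟩ := hs.classes.exists_equiv hs'.classes hrange
  have hrange' : Set.range (Prod.map eClass id ∘ fun x => ((⟦x⟧ : Quotient s), τ x)) =
      Set.range fun y => ((⟦y⟧ : Quotient s'), τ' y) := by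
    ext ⟨c, t⟩
    obtain ⟨c, rfl⟩ := eClass.surjective c
    have := Set.ext_iff.1 (heClass c) t
    simpa [classLabels] using this.symm
  obtain ⟨e, he⟩ := (hs.elements.comp_injective
    (eClass.injective.prodMap Function.injective_id)).exists_equiv hs'.elements hrange'
  simp only [Function.comp_apply, Prod.map_apply, id_eq, Prod.mk.injEq] at he
  refine ⟨e, fun x => (he x).2, fun x y => ?_⟩
  rw [← Quotient.eq, (he x).1, (he y).1, eClass.injective.eq_iff, Quotient.eq]

theorem classLabels_prod {K : Type} (s : Setoid X) (r : Setoid K) (τ : X → T)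
    (x : X) (k : K) :
    classLabels (s.prod r) (τ ∘ Prod.fst) ⟦(x, k)⟧ = classLabels s τ ⟦x⟧ := by
  rw [classLabels_mk, classLabels_mk]
  ext t
  exact ⟨fun ⟨y, hy, ht⟩ => ⟨y.1, hy.1, ht⟩, fun ⟨y, hy, ht⟩ => ⟨(y, k), ⟨hy, r.refl k⟩, ht⟩⟩

theorem range_classLabels_prod {K : Type} [Nonempty K] (s : Setoid X) (r : Setoid K) (τ : X → T) :
    Set.range (classLabels (s.prod r) (τ ∘ Prod.fst)) = Set.range (classLabels s τ) := by
  ext Q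
  constructor
  · rintro ⟨⟨x, k⟩, rfl⟩
    exact ⟨⟦x⟧, (classLabels_prod s r τ x k).symm⟩
  · rintro ⟨⟨x⟩, rfl⟩
    obtain ⟨k⟩ := ‹Nonempty K›
    exact ⟨⟦(x, k)⟧, classLabels_prod s r τ x k⟩

/-- The first factor `K` multiplies the elements of each class, the second one the classes. -/
theorem isHomogeneous_prod {K : Type} [Infinite K] (s : Setoid X) (τ : X → T) (hXK : #X ≤ #K) :
    IsHomogeneous (s.prod (Setoid.ker (Prod.snd : K × K → K))) (τ ∘ Prod.fst) #K := by
  have hK := aleph0_le_mk K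
  have hcard : #(X × (K × K)) ≤ #K := by
    simp only [mk_prod, lift_id]
    exact mul_le_of_le hK hXK (mul_le_of_le hK le_rfl le_rfl)
  constructor
  · rintro ⟨x, a⟩
    refine ((mk_subtype_le _).trans (mk_quotient_le.trans hcard)).antisymm
      (mk_le_of_injective (f := fun k => ⟨⟦(x, (k, k))⟧, ?_⟩) fun k k' h => ?_)
    · exact (classLabels_prod s _ τ x _).trans (classLabels_prod s _ τ x a).symm
    · exact (Quotient.exact (congrArg Subtype.val h)).2
  · rintro ⟨x, a⟩
    refine ((mk_subtype_le _).trans hcard).antisymm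
      (mk_le_of_injective (f := fun k => ⟨(x, (k, a.2)), ?_⟩) fun k k' h => ?_)
    · exact Prod.ext (Quotient.sound ⟨s.refl x, rfl⟩) rfl
    · exact congrArg (fun p => p.1.2.1) h

end Matching

section Gluing

variable {M M1 M2 : Type}

theorem isBoundedMorphism_of_equiv {F G : KFrame M} (e : F.W ≃ G.W)
    (h : ∀ m w v, G.R m (e w) (e v) ↔ F.R m w v) : IsBoundedMorphism F G e where
  forth hwv := (h _ _ _).2 hwv
  back {m w v'} hv' := ⟨e.symm v', (h m w _).1 (by rwa [e.apply_symm_apply]), e.apply_symm_apply v'⟩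

/-- The frame on the worlds of `F1` in which `□_E` and the operators of `M1` are taken from
`F1` and those of `M2` from `F2`, along a bijection of the worlds. -/
def KFrame.join (F1 : KFrame (Option M1)) (F2 : KFrame (Option M2)) (e : F1.W ≃ F2.W) :
    KFrame (Option (M1 ⊕ M2)) where
  W := F1.W
  ne := F1.ne
  R
    | none => F1.R none
    | some (.inl m) => F1.R (some m)
    | some (.inr m) => fun w v => F2.R (some m) (e w) (e v)

theorem KFrame.join_reduct_inl_R (F1 : KFrame (Option M1)) (F2 : KFrame (Option M2))
    (e : F1.W ≃ F2.W) (m : Option M1) (w v : F1.W) :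
    ((F1.join F2 e).reduct (Option.map Sum.inl)).R m w v ↔ F1.R m w v := by
  cases m <;> exact Iff.rfl

theorem KFrame.join_reduct_inr_R {F1 : KFrame (Option M1)} {F2 : KFrame (Option M2)}
    {e : F1.W ≃ F2.W} (he : ∀ w v, F2.R none (e w) (e v) ↔ F1.R none w v) (m : Option M2)
    (w v : F1.W) :
    ((F1.join F2 e).reduct (Option.map Sum.inr)).R m w v ↔ F2.R m (e w) (e v) := by
  cases m with
  | none => exact (he w v).symm
  | some m => exact Iff.rfl

theorem FrameFor.exists_gluing {T : Type} {d : DSem} {L1 : Set (PF M1)} {L2 : Set (PF M2)}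
    {F1 : KFrame (Option M1)} {F2 : KFrame (Option M2)} (h1 : FrameFor F1 (LS5 d L1))
    (h2 : FrameFor F2 (LS5 d L2)) (τ1 : F1.W → T) (τ2 : F2.W → T)
    (hτ : (Set.range fun w => τ1 '' {v | F1.R none w v}) =
      Set.range fun w => τ2 '' {v | F2.R none w v}) :
    ∃ (G : KFrame (Option (M1 ⊕ M2))) (π1 : G.W → F1.W) (π2 : G.W → F2.W),
      FrameFor G (fusionE (LS5 d L1) (LS5 d L2)) ∧
      IsBoundedMorphism (G.reduct (Option.map Sum.inl)) F1 π1 ∧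
      IsBoundedMorphism (G.reduct (Option.map Sum.inr)) F2 π2 ∧
      Function.Surjective π1 ∧ Function.Surjective π2 ∧ ∀ g, τ1 (π1 g) = τ2 (π2 g) := by
  let K := F1.W ⊕ F2.W ⊕ ℕ
  let r : Setoid (K × K) := Setoid.ker Prod.snd
  let s1 : Setoid F1.W := ⟨F1.R none, h1.isCommutatorFrame.equivalence⟩
  let s2 : Setoid F2.W := ⟨F2.R none, h2.isCommutatorFrame.equivalence⟩
  have hom1 : IsHomogeneous (s1.prod r) (τ1 ∘ Prod.fst) (Cardinal.mk K) :=
    isHomogeneous_prod s1 τ1 (Cardinal.mk_le_of_injective Sum.inl_injective)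
  have hom2 : IsHomogeneous (s2.prod r) (τ2 ∘ Prod.fst) (Cardinal.mk K) :=
    isHomogeneous_prod s2 τ2
      (Cardinal.mk_le_of_injective (Sum.inr_injective.comp Sum.inl_injective))
  obtain ⟨e, heτ, heR⟩ := hom1.exists_equiv hom2 <| by
    rwa [range_classLabels_prod, range_classLabels_prod, range_classLabels, range_classLabels]
  let P1 := F1.prodSetoid r
  let P2 := F2.prodSetoid r
  let e : P1.W ≃ P2.W := e
  have heR : ∀ w v, P2.R none (e w) (e v) ↔ P1.R none w v := heR
  let G := P1.join P2 e
  have inl : IsBoundedMorphism (G.reduct (Option.map Sum.inl)) P1 (Equiv.refl P1.W) :=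
    isBoundedMorphism_of_equiv _ fun m w v => (KFrame.join_reduct_inl_R P1 P2 e m w v).symm
  have inl' : IsBoundedMorphism P1 (G.reduct (Option.map Sum.inl)) (Equiv.refl P1.W) :=
    isBoundedMorphism_of_equiv _ (KFrame.join_reduct_inl_R P1 P2 e)
  have inr : IsBoundedMorphism (G.reduct (Option.map Sum.inr)) P2 e :=
    isBoundedMorphism_of_equiv (F := G.reduct _) e fun m w v =>
      (KFrame.join_reduct_inr_R heR m w v).symm
  have inr' : IsBoundedMorphism P2 (G.reduct (Option.map Sum.inr)) e.symm :=
    isBoundedMorphism_of_equiv (G := G.reduct _) e.symm fun m w v =>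
      (KFrame.join_reduct_inr_R heR m (e.symm w) (e.symm v)).trans
        (by rw [e.apply_symm_apply, e.apply_symm_apply])
  exact ⟨G, Prod.fst, Prod.fst ∘ e,
    frameFor_fusionE
      (frameFor_of_forall_isBoundedMorphism fun w => ⟨P1, _, h1.prodSetoid r, inl', w, rfl⟩)
      (frameFor_of_forall_isBoundedMorphism fun w =>
        ⟨P2, _, h2.prodSetoid r, inr', e.symm.surjective w⟩),
    (isBoundedMorphism_fst r).comp inl, (isBoundedMorphism_fst r).comp inr,
    Prod.fst_surjective, Prod.fst_surjective.comp e.surjective, fun g => (heτ g).symm⟩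

end Gluing

/-! ### Conservativity -/

section Conservativity

variable {M M' : Type}

/-- The constant `⊤`. -/
def PF.top : PF M := .neg .bot

theorem isTaut_top : IsTaut (PF.top : PF M) :=
  fun _ h => h.2 h.1

namespace PGlobal

variable {L : Set (PF M)} {L' : Set (PF M')} {φ ψ χ : PF M}

theorem trans (h : PGlobal L φ ψ) (h' : PGlobal L ψ χ) : PGlobal L φ χ := by
  induction h' with
  | ax h => exact .ax h
  | prem => exact h
  | mp _ _ ihimp ih => exact .mp ihimp ih
  | nec m _ ih => exact .nec m ih

theorem map {s : PF M → PF M'} {f : M → M'} (himp : ∀ φ ψ, s (.imp φ ψ) = .imp (s φ) (s ψ))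
    (hbox : ∀ m φ, s (.box m φ) = .box (f m) (s φ)) (hL : ∀ φ ∈ L, s φ ∈ L')
    (h : PGlobal L φ ψ) : PGlobal L' (s φ) (s ψ) := by
  induction h with
  | ax h => exact .ax (hL _ h)
  | prem => exact .prem
  | mp _ _ ihimp ih => exact .mp (himp _ _ ▸ ihimp) ih
  | nec m _ ih => exact hbox m _ ▸ .nec (f m) ih

theorem pVal {F : KFrame M} (hF : FrameFor F L) {V : ℕ → F.W → Prop} (h : PGlobal L φ ψ)
    (hφ : ∀ w, PVal (F := F) V φ w) (w : F.W) : PVal (F := F) V ψ w := by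
  induction h generalizing w with
  | ax h => exact hF _ h V w
  | prem => exact hφ w
  | mp _ _ ihimp ih => exact pVal_imp.1 (ihimp w) (ih w)
  | nec m _ ih => exact fun v _ => ih v

theorem top_iff (hL : IsPLogic L) : PGlobal L .top φ ↔ φ ∈ L := by
  refine ⟨fun h => ?_, .ax⟩
  induction h with
  | ax h => exact h
  | prem => exact hL.taut _ isTaut_top
  | mp _ _ ihimp ih => exact hL.mp _ _ ihimp ih
  | nec m _ ih => exact hL.nec m _ ih

end PGlobal

theorem GloballyKComplete.kComplete {L : Set (PF M)} (h : GloballyKComplete L)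
    (hL : IsPLogic L) : KComplete L :=
  fun _ hφ => (PGlobal.top_iff hL).1 <| (h _ _).2 fun F hF V _ => hφ F hF V

theorem KComplete.exists_frameFor {L : Set (PF M)} (h : KComplete L) (hbot : PF.bot ∉ L) :
    ∃ F, FrameFor F L := by
  by_contra! hF
  exact hbot (h _ fun F hFL => absurd hFL (hF F))

/-- Every frame for `K` is a bounded morphic image of the `ι`-reduct of a frame for `L`: a
semantic criterion for the conservativity of `L` over a complete logic `K`. -/
def FramesExpand (ι : M → M') (K : Set (PF M)) (L : Set (PF M')) : Prop :=
  ∀ F, FrameFor F K → ∃ (G : KFrame M') (π : G.W → F.W), FrameFor G L ∧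
    IsBoundedMorphism (G.reduct ι) F π ∧ Function.Surjective π

section FramesExpand

variable {ι : M → M'} {K : Set (PF M)} {L : Set (PF M')} {φ ψ : PF M}

theorem mapOp_mem_iff (hKL : ∀ φ ∈ K, φ.mapOp ι ∈ L) (h : FramesExpand ι K L)
    (hK : KComplete K) : φ.mapOp ι ∈ L ↔ φ ∈ K := by
  refine ⟨fun hφ => hK φ fun F hF V w => ?_, hKL φ⟩
  obtain ⟨G, π, hG, hπ, hsurj⟩ := h F hF
  obtain ⟨w, rfl⟩ := hsurj w
  exact (hπ.pVal_iff V φ w).1 ((pVal_mapOp G ι _ φ w).1 (hG _ hφ _ w))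

theorem pGlobal_mapOp_iff (hKL : ∀ φ ∈ K, φ.mapOp ι ∈ L) (h : FramesExpand ι K L)
    (hK : GloballyKComplete K) : PGlobal L (φ.mapOp ι) (ψ.mapOp ι) ↔ PGlobal K φ ψ := by
  refine ⟨fun hφψ => (hK φ ψ).2 fun F hF V hφ w => ?_,
    .map (fun _ _ => rfl) (fun _ _ => rfl) hKL⟩
  obtain ⟨G, π, hG, hπ, hsurj⟩ := h F hF
  obtain ⟨w, rfl⟩ := hsurj w
  have transfer (θ : PF M) (v : G.W) :
      PVal (F := G) (fun n u => V n (π u)) (θ.mapOp ι) v ↔ PVal (F := F) V θ (π v) :=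
    (pVal_mapOp G ι _ θ v).trans (hπ.pVal_iff V θ v)
  exact (transfer ψ w).1 (hφψ.pVal hG (fun v => (transfer φ v).2 (hφ (π v))) w)

end FramesExpand

section FusionE

variable {M1 M2 : Type} {K1 : Set (PF (Option M1))} {K2 : Set (PF (Option M2))}

theorem mapOp_inl_mem_fusionE {φ : PF (Option M1)} (hφ : φ ∈ K1) :
    φ.mapOp (Option.map Sum.inl) ∈ fusionE K1 K2 :=
  fun _ h => h.2.1 ⟨φ, hφ, rfl⟩

theorem mapOp_inr_mem_fusionE {φ : PF (Option M2)} (hφ : φ ∈ K2) :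
    φ.mapOp (Option.map Sum.inr) ∈ fusionE K1 K2 :=
  fun _ h => h.2.2 ⟨φ, hφ, rfl⟩

variable {d : DSem} {L1 : Set (PF M1)} {L2 : Set (PF M2)}
  {F1 : KFrame (Option M1)} {F2 : KFrame (Option M2)}

theorem FrameFor.exists_common_expansion (h1 : FrameFor F1 (LS5 d L1))
    (h2 : FrameFor F2 (LS5 d L2)) :
    ∃ (G : KFrame (Option (M1 ⊕ M2))) (π1 : G.W → F1.W) (π2 : G.W → F2.W),
      FrameFor G (fusionE (LS5 d L1) (LS5 d L2)) ∧
      IsBoundedMorphism (G.reduct (Option.map Sum.inl)) F1 π1 ∧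
      IsBoundedMorphism (G.reduct (Option.map Sum.inr)) F2 π2 ∧
      Function.Surjective π1 ∧ Function.Surjective π2 := by
  have labels {M : Type} {L : Set (PF M)} {F : KFrame (Option M)} (h : FrameFor F (LS5 d L)) :
      (Set.range fun w => (fun _ => ()) '' {v | F.R none w v}) = {Set.univ} := by
    have := F.ne
    have key (w : F.W) : (fun _ => ()) '' {v | F.R none w v} = (Set.univ : Set Unit) :=
      Set.eq_univ_of_forall fun _ => ⟨w, h.isCommutatorFrame.equivalence.refl w, rfl⟩
    simp only [key, Set.range_const]
  obtain ⟨G, π1, π2, hG, hπ1, hπ2, hs1, hs2, -⟩ :=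
    h1.exists_gluing h2 (fun _ => ()) (fun _ => ()) ((labels h1).trans (labels h2).symm)
  exact ⟨G, π1, π2, hG, hπ1, hπ2, hs1, hs2⟩

theorem framesExpand_inl (h2 : ∃ F2, FrameFor F2 (LS5 d L2)) :
    FramesExpand (Option.map Sum.inl) (LS5 d L1) (fusionE (LS5 d L1) (LS5 d L2)) := by
  intro F1 h1
  obtain ⟨F2, h2⟩ := h2
  obtain ⟨G, π1, -, hG, hπ1, -, hs1, -⟩ := h1.exists_common_expansion h2
  exact ⟨G, π1, hG, hπ1, hs1⟩

theorem framesExpand_inr (h1 : ∃ F1, FrameFor F1 (LS5 d L1)) :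
    FramesExpand (Option.map Sum.inr) (LS5 d L2) (fusionE (LS5 d L1) (LS5 d L2)) := by
  intro F2 h2
  obtain ⟨F1, h1⟩ := h1
  obtain ⟨G, -, π2, hG, -, hπ2, -, hs2⟩ := h1.exists_common_expansion h2
  exact ⟨G, π2, hG, hπ2, hs2⟩

end FusionE

end Conservativity

/-! ### Formulas describing `□_E`-classes -/

namespace PF

variable {M M' : Type}

/-- Iterated conjunction. -/
def conj (l : List (PF M)) : PF M := l.foldr and top

/-- Iterated disjunction. -/
def disj (l : List (PF M)) : PF M := neg (conj (l.map neg))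

/-- The state descriptions over `S`: conjunctions deciding every member of `S`. -/
def types : List (PF M) → List (PF M)
  | [] => [top]
  | a :: S => (types S).flatMap fun t => [and a t, and (neg a) t]

/-- Over `□_e`-classes: the formulas in `x` cover the class, and each of them is realised in it. -/
def cover (e : M) (x : List (PF M)) : PF M := and (conj (x.map (dia e))) (box e (disj x))

/-- Over `□_e`-classes: the class is described by one of the covers in `xs`. -/
def someCover (e : M) (xs : List (List (PF M))) : PF M := disj (xs.map (cover e))

/-- `χ` holds throughout the `□_e`-class of the current world, and at all worlds that can be
reached from it in fewer than `n` steps along `os`, when one may move within `□_e`-classes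
between the steps. -/
def hereditary (e : M) (os : List M) (χ : PF M) : ℕ → PF M
  | 0 => top
  | n + 1 => box e (and χ (conj (os.map fun m => box m (hereditary e os χ n))))

/-- The list of all occurrences of subformulas. -/
def subformulas : PF M → List (PF M)
  | atom n => [atom n]
  | neg φ => neg φ :: subformulas φ
  | and φ ψ => and φ ψ :: (subformulas φ ++ subformulas ψ)
  | box m φ => box m φ :: subformulas φ

/-- The list of all occurrences of modal operators. -/
def operators : PF M → List M
  | atom _ => []
  | neg φ => operators φ
  | and φ ψ => operators φ ++ operators ψ
  | box m φ => m :: operators φ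

/-- Translation into the signature `M'`, where `f` says which operators are available: a maximal
subformula whose main operator is not is replaced by an atom, namely its code. -/
def surrogate (f : M → Option M') (c : PF M → ℕ) : PF M → PF M'
  | atom n => atom (c (atom n))
  | neg φ => neg (surrogate f c φ)
  | and φ ψ => and (surrogate f c φ) (surrogate f c ψ)
  | box m φ => match f m with
    | some m' => box m' (surrogate f c φ)
    | none => atom (c (box m φ))

theorem mem_subformulas_self (φ : PF M) : φ ∈ subformulas φ := by
  cases φ <;> exact List.mem_cons_self

theorem subformulas_subset {φ ψ : PF M} (h : ψ ∈ subformulas φ) :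
    subformulas ψ ⊆ subformulas φ := by
  induction φ with
  | atom n => rw [List.mem_singleton.1 h]; exact List.Subset.refl _
  | neg φ ih =>
    obtain rfl | h := List.mem_cons.1 h
    · exact List.Subset.refl _
    · exact List.subset_cons_of_subset _ (ih h)
  | and φ ψ ihφ ihψ =>
    obtain rfl | h := List.mem_cons.1 h
    · exact List.Subset.refl _
    obtain h | h := List.mem_append.1 h
    · exact List.subset_cons_of_subset _ (List.subset_append_of_subset_left _ (ihφ h))
    · exact List.subset_cons_of_subset _ (List.subset_append_of_subset_right _ (ihψ h))
  | box m φ ih =>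
    obtain rfl | h := List.mem_cons.1 h
    · exact List.Subset.refl _
    · exact List.subset_cons_of_subset _ (ih h)

theorem operators_subset {φ ψ : PF M} (h : ψ ∈ subformulas φ) :
    operators ψ ⊆ operators φ := by
  induction φ with
  | atom n => rw [List.mem_singleton.1 h]; exact List.Subset.refl _
  | neg φ ih =>
    obtain rfl | h := List.mem_cons.1 h
    · exact List.Subset.refl _
    · exact ih h
  | and φ ψ ihφ ihψ =>
    obtain rfl | h := List.mem_cons.1 h
    · exact List.Subset.refl _
    obtain h | h := List.mem_append.1 h
    · exact List.subset_append_of_subset_left _ (ihφ h)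
    · exact List.subset_append_of_subset_right _ (ihψ h)
  | box m φ ih =>
    obtain rfl | h := List.mem_cons.1 h
    · exact List.Subset.refl _
    · exact List.subset_cons_of_subset _ (ih h)

theorem length_subformulas_pos (φ : PF M) : 0 < (subformulas φ).length :=
  List.length_pos_of_mem (mem_subformulas_self φ)

end PF

open PF

namespace IsBoolEval

variable {M : Type} {ev ev' : PF M → Prop} (h : IsBoolEval ev) (h' : IsBoolEval ev')
include h

theorem top : ev .top :=
  h.of_isTaut isTaut_top

theorem conj {l : List (PF M)} : ev (.conj l) ↔ ∀ a ∈ l, ev a := by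
  induction l with
  | nil => exact iff_of_true h.top (by simp)
  | cons a l ih => rw [List.forall_mem_cons, ← ih]; exact h.and _ _

theorem disj {l : List (PF M)} : ev (.disj l) ↔ ∃ a ∈ l, ev a := by
  simp [PF.disj, h.neg, h.conj]

theorem exists_mem_types (S : List (PF M)) : ∃ t ∈ types S, ev t := by
  induction S with
  | nil => exact ⟨.top, List.mem_singleton_self _, h.top⟩
  | cons a S ih =>
    obtain ⟨t, ht, hev⟩ := ih
    by_cases ha : ev a
    · exact ⟨.and a t, List.mem_flatMap.2 ⟨t, ht, by simp⟩, (h.and _ _).2 ⟨ha, hev⟩⟩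
    · exact ⟨.and a.neg t, List.mem_flatMap.2 ⟨t, ht, by simp⟩,
        (h.and _ _).2 ⟨(h.neg _).2 ha, hev⟩⟩

include h'

theorem iff_of_mem_types {S : List (PF M)} {t : PF M} (ht : t ∈ types S) (hev : ev t)
    (hev' : ev' t) {a : PF M} (ha : a ∈ S) : ev a ↔ ev' a := by
  induction S generalizing t with
  | nil => exact absurd ha List.not_mem_nil
  | cons b S ih =>
    obtain ⟨s, hs, ht⟩ := List.mem_flatMap.1 ht
    have hb : ev s ∧ ev' s ∧ (ev b ↔ ev' b) := by
      simp only [List.mem_cons, List.not_mem_nil, or_false] at ht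
      obtain rfl | rfl := ht <;> simp only [h.and, h'.and, h.neg, h'.neg] at hev hev' <;> tauto
    obtain rfl | ha := List.mem_cons.1 ha
    · exact hb.2.2
    · exact ih hs hb.1 hb.2.1 ha

end IsBoolEval

/-- `ev w` evaluates the Boolean connectives and the operator `□_e`, interpreted by `E`, as a
Kripke model does; nothing is assumed about the other operators. -/
structure IsModalEval {M W : Type} (e : M) (E : W → W → Prop) (ev : W → PF M → Prop) :
    Prop where
  bool : ∀ w, IsBoolEval (ev w)
  box : ∀ {φ w}, ev w (.box e φ) ↔ ∀ v, E w v → ev v φ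

/-- Truth of the surrogate of a formula at a world of a Kripke model `(F, V)`. -/
def SurrogateVal {M M' : Type} (F : KFrame M') (V : ℕ → F.W → Prop) (f : M → Option M')
    (c : PF M → ℕ) (w : F.W) (φ : PF M) : Prop :=
  PVal (F := F) V (surrogate f c φ) w

section SurrogateVal

variable {M M' : Type} {F : KFrame M'} {V : ℕ → F.W → Prop} {f : M → Option M'} {c : PF M → ℕ}

theorem surrogateVal_box {m : M} {m' : M'} (h : f m = some m') {φ : PF M} {w : F.W} :
    SurrogateVal F V f c w (.box m φ) ↔ ∀ v, F.R m' w v → SurrogateVal F V f c v φ := by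
  rw [SurrogateVal, surrogate, h]
  rfl

theorem isModalEval_surrogateVal {e : M} {e' : M'} (he : f e = some e') :
    IsModalEval e (F.R e') (SurrogateVal F V f c) where
  bool _ := ⟨fun _ => Iff.rfl, fun _ _ => Iff.rfl⟩
  box := surrogateVal_box he

end SurrogateVal

namespace IsModalEval

variable {M W : Type} {e : M} {E : W → W → Prop} {ev : W → PF M → Prop}
  (h : IsModalEval e E ev)
include h

theorem dia {a : PF M} {w : W} : ev w (.dia e a) ↔ ∃ v, E w v ∧ ev v a := by
  simp [PF.dia, (h.bool _).neg, h.box]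

theorem cover {x : List (PF M)} {w : W} : ev w (.cover e x) ↔
    (∀ t ∈ x, ∃ v, E w v ∧ ev v t) ∧ ∀ v, E w v → ∃ t ∈ x, ev v t := by
  simp [PF.cover, (h.bool _).and, (h.bool _).conj, (h.bool _).disj, h.dia, h.box]

theorem someCover {xs : List (List (PF M))} {w : W} :
    ev w (.someCover e xs) ↔ ∃ x ∈ xs, ev w (.cover e x) := by
  simp [PF.someCover, (h.bool w).disj]

theorem hereditary_succ {os : List M} {χ : PF M} {n : ℕ} {w : W} :
    ev w (.hereditary e os χ (n + 1)) ↔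
      ∀ v, E w v → ev v χ ∧ ∀ m ∈ os, ev v (.box m (.hereditary e os χ n)) := by
  simp [PF.hereditary, h.box, (h.bool _).and, (h.bool _).conj]

theorem hereditary_congr (hE : Equivalence E) {os : List M} {χ : PF M} {n : ℕ} {w v : W}
    (hwv : E w v) : ev w (.hereditary e os χ n) ↔ ev v (.hereditary e os χ n) := by
  cases n with
  | zero => exact iff_of_true (h.bool w).top (h.bool v).top
  | succ n =>
    rw [h.hereditary_succ, h.hereditary_succ]
    exact ⟨fun hw u hu => hw u (hE.trans hwv hu), fun hv u hu => hv u (hE.trans (hE.symm hwv) hu)⟩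

end IsModalEval

/-! ### Normal theories -/

section NormalTheories

variable {M : Type}

/-- A set of formulas closed under the rules of a normal modal logic other than uniform
substitution, such as a logic or the set of its global consequences of a formula. -/
structure IsNormalTheory (Θ : Set (PF M)) : Prop where
  taut : ∀ {φ}, IsTaut φ → φ ∈ Θ
  kax : ∀ m φ ψ, imp (box m (imp φ ψ)) (imp (box m φ) (box m ψ)) ∈ Θ
  mp : ∀ {φ ψ}, imp φ ψ ∈ Θ → φ ∈ Θ → ψ ∈ Θ
  nec : ∀ m {φ}, φ ∈ Θ → box m φ ∈ Θ

theorem IsPLogic.isNormalTheory {L : Set (PF M)} (h : IsPLogic L) : IsNormalTheory L where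
  taut := h.taut _
  kax m φ ψ := h.subst (fun n => if n = 0 then φ else ψ) _ (h.kax m 0 1)
  mp := h.mp _ _
  nec m _ := h.nec m _

namespace IsNormalTheory

variable {Θ : Set (PF M)} (h : IsNormalTheory Θ)
include h

theorem setOf_pGlobal (φ : PF M) : IsNormalTheory {ψ | PGlobal Θ φ ψ} where
  taut hψ := .ax (h.taut hψ)
  kax m ψ χ := .ax (h.kax m ψ χ)
  mp := .mp
  nec m _ := .nec m

theorem mem_of_tautEval {l : List (PF M)} {φ : PF M} (hl : ∀ a ∈ l, a ∈ Θ)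
    (hφ : ∀ v, (∀ a ∈ l, tautEval v a) → tautEval v φ) : φ ∈ Θ := by
  induction l generalizing φ with
  | nil => exact h.taut fun v => hφ v (List.forall_mem_nil _)
  | cons a l ih =>
    rw [List.forall_mem_cons] at hl
    refine h.mp (ih hl.2 fun v hv => ?_) hl.1
    exact (isBoolEval_tautEval v).imp.2 fun ha => hφ v (List.forall_mem_cons.2 ⟨ha, hv⟩)

theorem conj_box_imp_mem (m : M) {l : List (PF M)} {φ : PF M}
    (hφ : ∀ v, (∀ a ∈ l, tautEval v a) → tautEval v φ) :
    imp (conj (l.map (box m))) (box m φ) ∈ Θ := by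
  induction l generalizing φ with
  | nil =>
    have hbox : box m φ ∈ Θ := h.nec m (h.taut fun v => hφ v (List.forall_mem_nil _))
    exact h.mem_of_tautEval (List.forall_mem_singleton.2 hbox) fun v hv =>
      (isBoolEval_tautEval v).imp.2 fun _ => List.forall_mem_singleton.1 hv
  | cons a l ih =>
    have himp : imp (conj (l.map (box m))) (box m (imp a φ)) ∈ Θ := ih fun v hv =>
      (isBoolEval_tautEval v).imp.2 fun ha => hφ v (List.forall_mem_cons.2 ⟨ha, hv⟩)
    refine h.mem_of_tautEval (l := [_, _]) (by simpa using ⟨himp, h.kax m a φ⟩) fun v hv => ?_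
    have hv' := isBoolEval_tautEval v
    simp only [List.forall_mem_cons, hv'.imp, hv'.conj, List.map_cons] at hv ⊢
    exact fun ⟨ha, hl⟩ => hv.2.1 (hv.1 hl) ha

open scoped Classical in
theorem box_disj_mem_of_types (e : M) (S x : List (PF M)) : imp
    (conj (((types S).filter (· ∉ x)).map fun t => box e (neg t))) (box e (disj x)) ∈ Θ := by
  have := h.conj_box_imp_mem e (l := ((types S).filter (· ∉ x)).map neg) (φ := disj x)
    fun v hv => by
      have hv' := isBoolEval_tautEval v
      obtain ⟨t, ht, htv⟩ := hv'.exists_mem_types S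
      refine hv'.disj.2 ⟨t, ?_, htv⟩
      by_contra htx
      exact hv _ (List.mem_map_of_mem (List.mem_filter.2 ⟨ht, decide_eq_true htx⟩)) htv
  rwa [List.map_map] at this

open scoped Classical in
/-- Semantically: the state descriptions realised in an `□_e`-class form a cover of it, and
that cover is not refuted by `Θ`. -/
theorem exists_someCover_mem (e : M) (S : List (PF M)) :
    ∃ xs ∈ (types S).sublists'.sublists',
      (∀ x ∈ xs, neg (cover e x) ∉ Θ) ∧ someCover e xs ∈ Θ := by
  have filter_mem {α : Type} (p : α → Bool) (l : List α) : l.filter p ∈ l.sublists' :=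
    List.mem_sublists'.2 List.filter_sublist
  let covers := (types S).sublists'
  refine ⟨covers.filter fun x => neg (cover e x) ∉ Θ, filter_mem _ _,
    fun x hx => of_decide_eq_true (List.mem_filter.1 hx).2, ?_⟩
  refine h.mem_of_tautEval (l := (covers.filter fun x => neg (cover e x) ∈ Θ).map
    (fun x => neg (cover e x)) ++ covers.map fun x => imp
      (conj (((types S).filter (· ∉ x)).map fun t => box e (neg t))) (box e (disj x))) ?_ ?_
  · simp only [List.mem_append, List.mem_map, List.mem_filter, decide_eq_true_eq]
    rintro _ (⟨x, ⟨-, hx⟩, rfl⟩ | ⟨x, -, rfl⟩)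
    · exact hx
    · exact h.box_disj_mem_of_types e S x
  · intro v hv
    have hv' := isBoolEval_tautEval v
    let x := (types S).filter fun t => tautEval v (dia e t)
    have hx : x ∈ covers := filter_mem _ _
    simp only [List.forall_mem_append, List.forall_mem_map, List.mem_filter, decide_eq_true_eq,
      hv'.imp, hv'.conj, hv'.neg] at hv
    have hcover : tautEval v (cover e x) := by
      refine (hv'.and _ _).2 ⟨hv'.conj.2 ?_, hv.2 x hx fun t ⟨ht, htx⟩ => ?_⟩
      · rintro _ hdia
        obtain ⟨t, ht, rfl⟩ := List.mem_map.1 hdia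
        exact of_decide_eq_true (List.mem_filter.1 ht).2
      · by_contra hbox
        exact htx (List.mem_filter.2 ⟨ht, decide_eq_true hbox⟩)
    refine hv'.disj.2 ⟨_, List.mem_map_of_mem (List.mem_filter.2 ⟨hx, decide_eq_true ?_⟩), hcover⟩
    exact fun hneg => hv.1 x ⟨hx, hneg⟩ hcover

theorem hereditary_mem {e : M} {os : List M} {χ : PF M} (hχ : χ ∈ Θ) (n : ℕ) :
    hereditary e os χ n ∈ Θ := by
  induction n with
  | zero => exact h.taut isTaut_top
  | succ n ih =>
    refine h.nec e (h.mem_of_tautEval (l := χ :: os.map fun m => box m (hereditary e os χ n))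
      ?_ fun v hv => ?_)
    · simpa only [List.forall_mem_cons, List.forall_mem_map] using ⟨hχ, fun m _ => h.nec m ih⟩
    · rw [List.forall_mem_cons] at hv
      exact ⟨hv.1, (isBoolEval_tautEval v).conj.2 hv.2⟩

end IsNormalTheory

end NormalTheories

/-! ### Truth in glued models -/

section Transfer

/-- `Ω` assigns to each world of a frame for one of the component signatures formulas of the
combined signature `A` in such a way that truth of their surrogates at the world only depends on
truth of the formulas assigned to its successors. -/
structure IsScope {A M : Type} (F : KFrame M) (e : M) (ι : M → A) (Ω : F.W → Set (PF A)) :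
    Prop where
  neg : ∀ {w φ}, φ.neg ∈ Ω w → φ ∈ Ω w
  and : ∀ {w φ ψ}, φ.and ψ ∈ Ω w → φ ∈ Ω w ∧ ψ ∈ Ω w
  box : ∀ {w v m φ}, .box (ι m) φ ∈ Ω w → F.R m w v → φ ∈ Ω v
  congr : ∀ {w v}, F.R e w v → Ω w = Ω v

/-- A sufficient condition for the classes of `w` and `w'` to realise the same states: their
scopes agree, and they are described by the same cover, over a list including the scopes. -/
def ClassesMatch {A W1 W2 : Type} (e : A) (ev1 : W1 → PF A → Prop) (ev2 : W2 → PF A → Prop)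
    (Ω1 : W1 → Set (PF A)) (Ω2 : W2 → Set (PF A)) (w : W1) (w' : W2) : Prop :=
  Ω1 w = Ω2 w' ∧ ∃ S, (∀ ψ ∈ Ω1 w, ψ ∈ S) ∧
    ∃ x ⊆ types S, ev1 w (cover e x) ∧ ev2 w' (cover e x)

/-- The formulas in the scope of a world, together with their truth values. -/
def scopeState {A W : Type} (ev : W → PF A → Prop) (Ω : W → Set (PF A)) (w : W) :
    Set (PF A) × Set (PF A) :=
  (Ω w, {ψ ∈ Ω w | ev w ψ})

section ClassesMatch

variable {A W1 W2 : Type} {e : A} {ev1 : W1 → PF A → Prop} {ev2 : W2 → PF A → Prop}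
  {Ω1 : W1 → Set (PF A)} {Ω2 : W2 → Set (PF A)} {w : W1} {w' : W2}

theorem ClassesMatch.symm (h : ClassesMatch e ev1 ev2 Ω1 Ω2 w w') :
    ClassesMatch e ev2 ev1 Ω2 Ω1 w' w := by
  obtain ⟨hΩ, S, hS, x, hx, h1, h2⟩ := h
  exact ⟨hΩ.symm, S, hΩ ▸ hS, x, hx, h2, h1⟩

variable {E1 : W1 → W1 → Prop} {E2 : W2 → W2 → Prop} (h1 : IsModalEval e E1 ev1)
  (h2 : IsModalEval e E2 ev2) (hΩ1 : ∀ {w v}, E1 w v → Ω1 w = Ω1 v)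
  (hΩ2 : ∀ {w v}, E2 w v → Ω2 w = Ω2 v)
include h1 h2 hΩ1 hΩ2

theorem ClassesMatch.image_scopeState_subset (h : ClassesMatch e ev1 ev2 Ω1 Ω2 w w') :
    scopeState ev1 Ω1 '' {v | E1 w v} ⊆ scopeState ev2 Ω2 '' {v | E2 w' v} := by
  obtain ⟨hΩ, S, hS, x, hx, hw, hw'⟩ := h
  rintro _ ⟨v, hv, rfl⟩
  obtain ⟨t, ht, hvt⟩ := (h1.cover.1 hw).2 v hv
  obtain ⟨v', hv', hvt'⟩ := (h2.cover.1 hw').1 t ht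
  have hΩv : Ω2 v' = Ω1 v := by rw [← hΩ2 hv', ← hΩ, hΩ1 hv]
  have agree (ψ : PF A) (hψ : ψ ∈ Ω1 v) : ev2 v' ψ ↔ ev1 v ψ :=
    (h2.bool v').iff_of_mem_types (h1.bool v) (hx ht) hvt' hvt (hS ψ (hΩ1 hv ▸ hψ))
  refine ⟨v', hv', Prod.ext hΩv (Set.ext fun ψ => ?_)⟩
  change ψ ∈ Ω2 v' ∧ ev2 v' ψ ↔ ψ ∈ Ω1 v ∧ ev1 v ψ
  rw [hΩv]
  exact and_congr_right (agree ψ)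

theorem range_image_scopeState_eq (h12 : ∀ w, ∃ w', ClassesMatch e ev1 ev2 Ω1 Ω2 w w')
    (h21 : ∀ w', ∃ w, ClassesMatch e ev1 ev2 Ω1 Ω2 w w') :
    (Set.range fun w => scopeState ev1 Ω1 '' {v | E1 w v}) =
      Set.range fun w => scopeState ev2 Ω2 '' {v | E2 w v} := by
  have key {w w'} (h : ClassesMatch e ev1 ev2 Ω1 Ω2 w w') :
      scopeState ev1 Ω1 '' {v | E1 w v} = scopeState ev2 Ω2 '' {v | E2 w' v} :=
    (h.image_scopeState_subset h1 h2 hΩ1 hΩ2).antisymm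
      (h.symm.image_scopeState_subset h2 h1 hΩ2 hΩ1)
  apply Set.Subset.antisymm
  · rintro _ ⟨w, rfl⟩
    obtain ⟨w', h⟩ := h12 w
    exact ⟨w', (key h).symm⟩
  · rintro _ ⟨w', rfl⟩
    obtain ⟨w, h⟩ := h21 w'
    exact ⟨w, key h⟩

end ClassesMatch

theorem IsScope.pVal_box_iff {A M : Type} {F : KFrame M} {G : KFrame A} {e : M} {ι : M → A}
    {Ω : F.W → Set (PF A)} (hΩ : IsScope F e ι Ω) {f : A → Option M} {π : G.W → F.W}
    (hπ : IsBoundedMorphism (G.reduct ι) F π) {c : PF A → ℕ} {V : ℕ → F.W → Prop}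
    {V' : ℕ → G.W → Prop} {m : M} (hf : f (ι m) = some m) {ψ : PF A}
    (ih : ∀ g, ψ ∈ Ω (π g) → (PVal (F := G) V' ψ g ↔ SurrogateVal F V f c (π g) ψ)) {g : G.W}
    (hψ : PF.box (ι m) ψ ∈ Ω (π g)) :
    PVal (F := G) V' (.box (ι m) ψ) g ↔ SurrogateVal F V f c (π g) (.box (ι m) ψ) := by
  rw [surrogateVal_box hf]
  constructor
  · intro h v hv
    obtain ⟨g', hg', rfl⟩ := hπ.back hv
    exact (ih g' (hΩ.box hψ hv)).1 (h g' hg')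
  · intro h g' hg'
    have hv : F.R m (π g) (π g') := hπ.forth hg'
    exact (ih g' (hΩ.box hψ hv)).2 (h _ hv)

variable {M1 M2 : Type}

/-- The operator of the first component denoted by an operator of the fusion, if any. -/
def leftOp : Option (M1 ⊕ M2) → Option (Option M1)
  | none => some none
  | some (.inl m) => some (some m)
  | some (.inr _) => none

/-- The operator of the second component denoted by an operator of the fusion, if any. -/
def rightOp : Option (M1 ⊕ M2) → Option (Option M2)
  | none => some none
  | some (.inl _) => none
  | some (.inr m) => some (some m)

theorem isPartialInv_leftOp :
    Function.IsPartialInv (Option.map Sum.inl) (leftOp : Option (M1 ⊕ M2) → _) := by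
  rintro (_ | m) (_ | m' | m') <;> simp [leftOp, eq_comm]

theorem isPartialInv_rightOp :
    Function.IsPartialInv (Option.map Sum.inr) (rightOp : Option (M1 ⊕ M2) → _) := by
  rintro (_ | m) (_ | m' | m') <;> simp [rightOp, eq_comm]

variable {d : DSem} {L1 : Set (PF M1)} {L2 : Set (PF M2)} {B1 : KFrame (Option M1)}
  {B2 : KFrame (Option M2)} {V1 : ℕ → B1.W → Prop} {V2 : ℕ → B2.W → Prop}
  {c : PF (Option (M1 ⊕ M2)) → ℕ} {Ω1 : B1.W → Set (PF (Option (M1 ⊕ M2)))}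
  {Ω2 : B2.W → Set (PF (Option (M1 ⊕ M2)))}

theorem pVal_iff_surrogateVal (hΩ1 : IsScope B1 none (Option.map Sum.inl) Ω1)
    (hΩ2 : IsScope B2 none (Option.map Sum.inr) Ω2) {G : KFrame (Option (M1 ⊕ M2))}
    {π1 : G.W → B1.W} {π2 : G.W → B2.W}
    (hπ1 : IsBoundedMorphism (G.reduct (Option.map Sum.inl)) B1 π1)
    (hπ2 : IsBoundedMorphism (G.reduct (Option.map Sum.inr)) B2 π2)
    (hπ : ∀ g, scopeState (SurrogateVal B1 V1 leftOp c) Ω1 (π1 g) =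
      scopeState (SurrogateVal B2 V2 rightOp c) Ω2 (π2 g))
    {ψ : PF (Option (M1 ⊕ M2))} {g : G.W} (hψ : ψ ∈ Ω1 (π1 g)) :
    PVal (F := G) (fun n g => V1 (c (atom n)) (π1 g)) ψ g ↔
      SurrogateVal B1 V1 leftOp c (π1 g) ψ := by
  have hΩ (g) : Ω1 (π1 g) = Ω2 (π2 g) := congrArg Prod.fst (hπ g)
  have agree {g ψ} (hψ : ψ ∈ Ω1 (π1 g)) :
      SurrogateVal B1 V1 leftOp c (π1 g) ψ ↔ SurrogateVal B2 V2 rightOp c (π2 g) ψ := by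
    have := Set.ext_iff.1 (congrArg Prod.snd (hπ g)) ψ
    exact ⟨fun h => (this.1 ⟨hψ, h⟩).2, fun h => (this.2 ⟨hΩ g ▸ hψ, h⟩).2⟩
  induction ψ generalizing g with
  | atom n => rfl
  | neg φ ih => exact not_congr (ih (hΩ1.neg hψ))
  | and φ ψ ihφ ihψ => exact and_congr (ihφ (hΩ1.and hψ).1) (ihψ (hΩ1.and hψ).2)
  | box o φ ih =>
    obtain _ | m | m := o
    · exact hΩ1.pVal_box_iff hπ1 (m := none) rfl (fun _ h => ih h) hψ
    · exact hΩ1.pVal_box_iff hπ1 (m := some m) rfl (fun _ h => ih h) hψ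
    · rw [agree hψ]
      exact hΩ2.pVal_box_iff hπ2 (m := some m) rfl
        (fun g h => (ih (hΩ g ▸ h)).trans (agree (hΩ g ▸ h))) (hΩ g ▸ hψ)

theorem exists_joint_model (h1 : FrameFor B1 (LS5 d L1)) (h2 : FrameFor B2 (LS5 d L2))
    (hΩ1 : IsScope B1 none (Option.map Sum.inl) Ω1)
    (hΩ2 : IsScope B2 none (Option.map Sum.inr) Ω2)
    (h12 : ∀ w, ∃ w', ClassesMatch none (SurrogateVal B1 V1 leftOp c)
      (SurrogateVal B2 V2 rightOp c) Ω1 Ω2 w w')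
    (h21 : ∀ w', ∃ w, ClassesMatch none (SurrogateVal B1 V1 leftOp c)
      (SurrogateVal B2 V2 rightOp c) Ω1 Ω2 w w') :
    ∃ (G : KFrame (Option (M1 ⊕ M2))) (V : ℕ → G.W → Prop) (π : G.W → B1.W),
      FrameFor G (fusionE (LS5 d L1) (LS5 d L2)) ∧ Function.Surjective π ∧
      ∀ ψ g, ψ ∈ Ω1 (π g) →
        (PVal (F := G) V ψ g ↔ SurrogateVal B1 V1 leftOp c (π g) ψ) := by
  obtain ⟨G, π1, π2, hG, hπ1, hπ2, hsurj, -, hπ⟩ := h1.exists_gluing h2 _ _ <|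
    range_image_scopeState_eq (e := none) (isModalEval_surrogateVal (e := none) (f := leftOp) rfl)
      (isModalEval_surrogateVal (e := none) (f := rightOp) rfl)
      hΩ1.congr hΩ2.congr h12 h21
  exact ⟨G, _, π1, hG, hsurj, fun _ _ => pVal_iff_surrogateVal hΩ1 hΩ2 hπ1 hπ2 hπ⟩

end Transfer

open scoped Function

/-! ### Certificates for non-theorems -/

section DisjointUnions

variable {M I : Type} [Nonempty I] {K : Set (PF M)}

theorem KComplete.exists_model_refuting (hK : KComplete K) {φ : I → PF M}
    (hφ : ∀ i, φ i ∉ K) :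
    ∃ (B : KFrame M) (V : ℕ → B.W → Prop) (r : B.W → I), FrameFor B K ∧
      (∀ {m w v}, B.R m w v → r w = r v) ∧ ∀ i, ∃ w, r w = i ∧ ¬ PVal (F := B) V (φ i) w := by
  have refute (i : I) : ∃ (F : KFrame M) (V : ℕ → F.W → Prop) (w : F.W),
      FrameFor F K ∧ ¬ PVal (F := F) V (φ i) w := by
    simpa only [PValid, not_forall, exists_prop, exists_and_left] using mt (hK (φ i)) (hφ i)
  choose F V w hF hw using refute
  exact ⟨.sigma F, fun n p => V p.1 n p.2, Sigma.fst, .sigma hF, fun h => h.1,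
    fun i => ⟨⟨i, w i⟩, rfl, mt (pVal_sigma V (φ i) i (w i)).1 (hw i)⟩⟩

theorem GloballyKComplete.exists_model_refuting {M : Type} {K : Set (PF M)}
    (hK : GloballyKComplete K) {α φ : PF M} (hφ : ¬ PGlobal K α φ) :
    ∃ (B : KFrame M) (V : ℕ → B.W → Prop), FrameFor B K ∧ (∀ w, PVal (F := B) V α w) ∧
      ∀ ψ, ¬ PGlobal K α ψ → ∃ w, ¬ PVal (F := B) V ψ w := by
  let I := {ψ // ¬ PGlobal K α ψ}
  have : Nonempty I := ⟨φ, hφ⟩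
  have refute (i : I) : ∃ (F : KFrame M) (V : ℕ → F.W → Prop) (w : F.W),
      FrameFor F K ∧ (∀ w, PVal (F := F) V α w) ∧ ¬ PVal (F := F) V i.1 w := by
    simpa only [not_forall, exists_prop, exists_and_left] using mt (hK α i.1).2 i.2
  choose F V w hF hα hw using refute
  exact ⟨.sigma F, fun n p => V p.1 n p.2, .sigma hF,
    fun ⟨i, v⟩ => (pVal_sigma V α i v).2 (hα i v),
    fun ψ hψ => ⟨⟨⟨ψ, hψ⟩, w _⟩, mt (pVal_sigma V ψ ⟨ψ, hψ⟩ (w _)).1 (hw _)⟩⟩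

end DisjointUnions

section Level

variable {A W : Type}

open scoped Classical in
/-- The largest `k ≤ bound w` such that `hereditary e os χ k` is true at `w`. -/
noncomputable def level (ev : W → PF A → Prop) (e : A) (os : List A) (χ : PF A) (bound : W → ℕ)
    (w : W) : ℕ :=
  Nat.findGreatest (fun k => ev w (hereditary e os χ k)) (bound w)

variable {ev : W → PF A → Prop} {e : A} {os : List A} {χ : PF A} {bound : W → ℕ} {w v : W}

theorem level_le : level ev e os χ bound w ≤ bound w := by
  classical
  exact Nat.findGreatest_le _

theorem level_eq_bound (hw : ev w (hereditary e os χ (bound w))) :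
    level ev e os χ bound w = bound w := by
  classical
  exact level_le.antisymm (Nat.le_findGreatest le_rfl hw)

variable {E : W → W → Prop} (h : IsModalEval e E ev)
include h

theorem hereditary_level : ev w (hereditary e os χ (level ev e os χ bound w)) := by
  classical
  exact Nat.findGreatest_spec (P := fun k => ev w (hereditary e os χ k))
    (Nat.zero_le _) (h.bool w).top

variable (hE : Equivalence E)
include hE

theorem level_congr (hwv : E w v) (hb : bound w = bound v) :
    level ev e os χ bound w = level ev e os χ bound v := by
  unfold level
  congr 1
  exact funext fun k => propext (h.hereditary_congr hE hwv)

theorem ev_of_level_pos (hw : 0 < level ev e os χ bound w) : ev w χ := by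
  obtain ⟨k, hk⟩ := Nat.exists_eq_add_one.2 hw
  exact (h.hereditary_succ.1 (hk ▸ hereditary_level h) w (hE.refl w)).1

theorem level_le_succ {m : A} (hm : m ∈ os) (hbox : ∀ φ, ev w (box m φ) → ev v φ)
    (hb : bound w = bound v) : level ev e os χ bound w ≤ level ev e os χ bound v + 1 := by
  obtain hw | hw := Nat.eq_zero_or_pos (level ev e os χ bound w)
  · omega
  obtain ⟨k, hk⟩ := Nat.exists_eq_add_one.2 hw
  have hv : ev v (hereditary e os χ k) :=
    hbox _ ((h.hereditary_succ.1 (hk ▸ hereditary_level h) w (hE.refl w)).2 m hm)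
  have hkb : k + 1 ≤ bound v := hk ▸ hb ▸ level_le
  rw [hk]
  classical
  exact Nat.succ_le_succ (Nat.le_findGreatest (Nat.le_of_succ_le hkb) hv)

end Level

section LocalCertificates

variable {A M : Type}

/-- For each cover in `xs`, the theory `Θ` allows it at an `□_e`-class from which only covers in
`xs` can be reached in few steps along the operators of `φ`. -/
def CoversConsistent (e : A) (Θ : Set (PF A)) (φ : PF A) (xs : List (List (PF A))) : Prop :=
  ∀ n < (subformulas φ).length, ∀ x ∈ xs,
    imp (hereditary e (operators φ) (someCover e xs) (n + 1)) (neg (cover e x)) ∉ Θ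

/-- A certificate that `φ` is not in the fusion of two logics, where `Θ1` and `Θ2` are the sets
of formulas whose surrogates belong to them. -/
def IsLocalCertificate (e : A) (Θ1 Θ2 : Set (PF A)) (φ : PF A) (xs : List (List (PF A))) :
    Prop :=
  CoversConsistent e Θ1 φ xs ∧ CoversConsistent e Θ2 φ xs ∧
    imp (hereditary e (operators φ) (someCover e xs) (subformulas φ).length) φ ∉ Θ1

/-- The candidates for the list of covers in a certificate, for subformulas in `S`. -/
def coverLists (S : List (PF A)) : List (List (List (PF A))) :=
  (types S).sublists'.sublists'

theorem subset_types_of_mem_coverLists {S : List (PF A)} {xs : List (List (PF A))}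
    (hxs : xs ∈ coverLists S) {x : List (PF A)} (hx : x ∈ xs) : x ⊆ types S :=
  (List.mem_sublists'.1 ((List.mem_sublists'.1 hxs).subset hx)).subset

/-- A model `(B, V)` for one of the component logics, stratified by `l` according to how many
further steps the covers are controlled, in which all levels and covers in `xs` occur. Its
operator `e'` is the one denoted by `e`. -/
structure IsLevelledModel (e : A) (f : A → Option M) (c : PF A → ℕ) (φ : PF A)
    (xs : List (List (PF A))) (e' : M) (B : KFrame M) (V : ℕ → B.W → Prop) (l : B.W → ℕ) :
    Prop where
  equivalence : Equivalence (B.R e')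
  le : ∀ w, l w ≤ (subformulas φ).length
  congr : ∀ {w v}, B.R e' w v → l w = l v
  step : ∀ {m m' w v}, f m = some m' → m ∈ operators φ → B.R m' w v → l w ≤ l v + 1
  exists_cover : ∀ {w}, 0 < l w → ∃ x ∈ xs, SurrogateVal B V f c w (cover e x)
  exists_zero : ∃ w, l w = 0
  exists_of_cover : ∀ {n x}, n < (subformulas φ).length → x ∈ xs →
    ∃ w, l w = n + 1 ∧ SurrogateVal B V f c w (cover e x)

section Existence

variable {e : A} {f : A → Option M} {c : PF A → ℕ} {φ : PF A} {xs : List (List (PF A))} {e' : M}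
  {K : Set (PF M)}

theorem imp_top_bot_notMem (hK : IsPLogic K) (hbot : bot ∉ K) :
    imp top bot ∉ surrogate f c ⁻¹' K := fun h =>
  hbot <| hK.isNormalTheory.mem_of_tautEval (List.forall_mem_singleton.2 h) fun v hv => by
    have hev : IsBoolEval fun θ : PF A => tautEval v (surrogate f c θ) :=
      ⟨fun _ => Iff.rfl, fun _ _ => Iff.rfl⟩
    have hbot := hev.imp.1 (List.forall_mem_singleton.1 hv) hev.top
    exact absurd hbot.1 hbot.2

/-- Refute the required formulas in a disjoint union of models, and let the level of a world be
bounded by the level at which the component it belongs to was chosen. -/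
theorem exists_isLevelledModel (hK : IsPLogic K) (hS5 : ContainsS5 K e') (hbot : bot ∉ K)
    (hcomp : KComplete K) (he : f e = some e')
    (hxs : CoversConsistent e (surrogate f c ⁻¹' K) φ xs) :
    ∃ B V l, FrameFor B K ∧ IsLevelledModel e f c φ xs e' B V l ∧ ∀ θ,
      imp (hereditary e (operators φ) (someCover e xs) (subformulas φ).length) θ ∉
        surrogate f c ⁻¹' K → ∃ w, l w = (subformulas φ).length ∧ ¬ SurrogateVal B V f c w θ := by
  let N := (subformulas φ).length
  let χ := someCover e xs
  let I := {p : ℕ × PF A // p.1 ≤ N ∧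
    imp (hereditary e (operators φ) χ p.1) p.2 ∉ surrogate f c ⁻¹' K}
  have : Nonempty I := ⟨(0, bot), Nat.zero_le _, imp_top_bot_notMem hK hbot⟩
  obtain ⟨B, V, r, hB, hr, hrefute⟩ := hcomp.exists_model_refuting
    (φ := fun i : I => surrogate f c (imp (hereditary e (operators φ) χ i.1.1) i.1.2))
    fun i => i.2.2
  have hE : Equivalence (B.R e') := hB.equivalence hS5
  have hev : IsModalEval e (B.R e') (SurrogateVal B V f c) := isModalEval_surrogateVal he
  let l := level (SurrogateVal B V f c) e (operators φ) χ fun w => (r w).1.1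
  have realise {k : ℕ} {θ : PF A} (hk : k ≤ N)
      (hθ : imp (hereditary e (operators φ) χ k) θ ∉ surrogate f c ⁻¹' K) :
      ∃ w, l w = k ∧ ¬ SurrogateVal B V f c w θ := by
    obtain ⟨w, hw, href⟩ := hrefute ⟨(k, θ), hk, hθ⟩
    have hbound : (r w).1.1 = k := by rw [hw]
    have href' := Classical.not_imp.1 (mt (hev.bool w).imp.2 href)
    exact ⟨w, (level_eq_bound (bound := fun w => (r w).1.1) (hbound ▸ href'.1)).trans hbound,
      href'.2⟩
  refine ⟨B, V, l, hB, ⟨hE, fun w => level_le.trans (r w).2.1, fun hwv => ?_,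
    fun hm hmem hwv => ?_, fun hw => hev.someCover.1 (ev_of_level_pos hev hE hw), ?_,
    fun hn hx => ?_⟩, fun θ => realise le_rfl⟩
  · exact level_congr hev hE hwv (by rw [hr hwv])
  · exact level_le_succ hev hE hmem (fun _ hbox => (surrogateVal_box hm).1 hbox _ hwv)
      (by rw [hr hwv])
  · obtain ⟨w, hw, -⟩ := realise (Nat.zero_le _) (imp_top_bot_notMem hK hbot)
    exact ⟨w, hw⟩
  · obtain ⟨w, hw, hcover⟩ := realise hn (hxs _ hn _ hx)
    exact ⟨w, hw, not_not.1 fun h => hcover (((hev.bool w).neg _).2 h)⟩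

end Existence

/-- The subformulas of `φ` whose truth at `w` is controlled in a levelled model. -/
def levelScope {W : Type} (φ : PF A) (l : W → ℕ) (w : W) : Set (PF A) :=
  {ψ ∈ subformulas φ | (subformulas ψ).length ≤ l w}

namespace IsLevelledModel

variable {M1 M2 : Type} {e : A} {f1 : A → Option M1} {f2 : A → Option M2} {c : PF A → ℕ}
  {φ : PF A} {xs : List (List (PF A))} {e1 : M1} {e2 : M2} {B1 : KFrame M1} {B2 : KFrame M2}
  {V1 : ℕ → B1.W → Prop} {V2 : ℕ → B2.W → Prop} {l1 : B1.W → ℕ} {l2 : B2.W → ℕ}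
  (h1 : IsLevelledModel e f1 c φ xs e1 B1 V1 l1) (h2 : IsLevelledModel e f2 c φ xs e2 B2 V2 l2)
include h1

theorem isScope {ι : M1 → A} (hf : Function.IsPartialInv ι f1) :
    IsScope B1 e1 ι (levelScope φ l1) where
  neg := fun ⟨hmem, hl⟩ =>
    ⟨subformulas_subset hmem (List.mem_cons_of_mem _ (mem_subformulas_self _)),
      Nat.le_of_succ_le hl⟩
  and := fun ⟨hmem, hl⟩ => by
    simp only [subformulas, List.length_cons, List.length_append] at hl
    exact ⟨⟨subformulas_subset hmem (by simp [subformulas, mem_subformulas_self]), by omega⟩,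
      ⟨subformulas_subset hmem (by simp [subformulas, mem_subformulas_self]), by omega⟩⟩
  box := fun ⟨hmem, hl⟩ hwv =>
    ⟨subformulas_subset hmem (List.mem_cons_of_mem _ (mem_subformulas_self _)),
      Nat.le_of_succ_le_succ (hl.trans (h1.step ((hf _ _).2 rfl)
        (operators_subset hmem List.mem_cons_self) hwv))⟩
  congr hwv := by rw [levelScope, levelScope, h1.congr hwv]

include h2

theorem exists_classesMatch (he1 : f1 e = some e1) (he2 : f2 e = some e2)
    (hxs : xs ∈ coverLists (subformulas φ)) (w : B1.W) :
    ∃ w', ClassesMatch e (SurrogateVal B1 V1 f1 c) (SurrogateVal B2 V2 f2 c)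
      (levelScope φ l1) (levelScope φ l2) w w' := by
  have hscope {w w'} (h : l2 w' = l1 w) : levelScope φ l1 w = levelScope φ l2 w' := by
    rw [levelScope, levelScope, h]
  obtain hw | hw := Nat.eq_zero_or_pos (l1 w)
  · have cover_top {M' : Type} {f : A → Option M'} {e' : M'} (he : f e = some e') {B : KFrame M'}
        {V : ℕ → B.W → Prop} (hE : Equivalence (B.R e')) (v : B.W) :
        SurrogateVal B V f c v (cover e [top]) := by
      have hev : IsModalEval e (B.R e') (SurrogateVal B V f c) := isModalEval_surrogateVal he
      exact hev.cover.2 ⟨fun t ht => ⟨v, hE.refl v, List.mem_singleton.1 ht ▸ (hev.bool v).top⟩,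
        fun u _ => ⟨top, List.mem_singleton_self _, (hev.bool u).top⟩⟩
    obtain ⟨w', hw'⟩ := h2.exists_zero
    refine ⟨w', hscope (hw'.trans hw.symm), [], fun ψ ⟨_, hψ⟩ => ?_, [top], List.Subset.refl _,
      cover_top he1 h1.equivalence w, cover_top he2 h2.equivalence w'⟩
    exact absurd (hψ.trans_eq hw) (length_subformulas_pos ψ).not_ge
  · obtain ⟨n, hn⟩ := Nat.exists_eq_add_one.2 hw
    obtain ⟨x, hx, hcover⟩ := h1.exists_cover hw
    obtain ⟨w', hw', hcover'⟩ := h2.exists_of_cover (hn ▸ h1.le w) hx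
    exact ⟨w', hscope (hw'.trans hn.symm), subformulas φ, fun ψ hψ => hψ.1, x,
      subset_types_of_mem_coverLists hxs hx, hcover, hcover'⟩

end IsLevelledModel

end LocalCertificates

section GlobalCertificates

/-- A certificate that `ψ` is not a global consequence of `φ` in the fusion of two logics, where
`Γ1` and `Γ2` are the consequence relations between surrogates. -/
def IsGlobalCertificate {A : Type} (e : A) (Γ1 Γ2 : PF A → PF A → Prop) (φ ψ : PF A)
    (xs : List (List (PF A))) : Prop :=
  (∀ x ∈ xs, ¬ Γ1 (and (someCover e xs) φ) (neg (cover e x))) ∧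
    (∀ x ∈ xs, ¬ Γ2 (and (someCover e xs) φ) (neg (cover e x))) ∧
    ¬ Γ1 (and (someCover e xs) φ) ψ

theorem exists_classesMatch_of_someCover {A W1 W2 : Type} {e : A} {E1 : W1 → W1 → Prop}
    {ev1 : W1 → PF A → Prop} {ev2 : W2 → PF A → Prop} (h1 : IsModalEval e E1 ev1)
    {S : List (PF A)} {xs : List (List (PF A))} (hxs : xs ∈ coverLists S) {w : W1}
    (hw : ev1 w (someCover e xs)) (h2 : ∀ x ∈ xs, ∃ w', ev2 w' (cover e x)) :
    ∃ w', ClassesMatch e ev1 ev2 (fun _ => {χ | χ ∈ S}) (fun _ => {χ | χ ∈ S}) w w' := by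
  obtain ⟨x, hx, hcover⟩ := h1.someCover.1 hw
  obtain ⟨w', hcover'⟩ := h2 x hx
  exact ⟨w', rfl, S, fun _ hψ => hψ, x, subset_types_of_mem_coverLists hxs hx, hcover, hcover'⟩

theorem isScope_const {A M : Type} {F : KFrame M} {e : M} {ι : M → A} {S : List (PF A)}
    (hS : ∀ {χ}, χ ∈ S → subformulas χ ⊆ S) : IsScope F e ι fun _ => {χ | χ ∈ S} where
  neg h := hS h (List.mem_cons_of_mem _ (mem_subformulas_self _))
  and h := ⟨hS h (by simp [subformulas, mem_subformulas_self]),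
    hS h (by simp [subformulas, mem_subformulas_self])⟩
  box h _ := hS h (List.mem_cons_of_mem _ (mem_subformulas_self _))
  congr _ := rfl

end GlobalCertificates

section Soundness

variable {M1 M2 : Type} {d : DSem} {L1 : Set (PF M1)} {L2 : Set (PF M2)}
  {c : PF (Option (M1 ⊕ M2)) → ℕ}

theorem IsLocalCertificate.exists_countermodel (hbot1 : bot ∉ LS5 d L1) (hbot2 : bot ∉ LS5 d L2)
    (hK1 : KComplete (LS5 d L1)) (hK2 : KComplete (LS5 d L2)) {φ : PF (Option (M1 ⊕ M2))}
    {xs : List (List (PF (Option (M1 ⊕ M2))))} (hxs : xs ∈ coverLists (subformulas φ))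
    (h : IsLocalCertificate none (surrogate leftOp c ⁻¹' LS5 d L1)
      (surrogate rightOp c ⁻¹' LS5 d L2) φ xs) :
    ∃ (G : KFrame (Option (M1 ⊕ M2))) (V : ℕ → G.W → Prop) (g : G.W),
      FrameFor G (fusionE (LS5 d L1) (LS5 d L2)) ∧ ¬ PVal (F := G) V φ g := by
  obtain ⟨hxs1, hxs2, hφ⟩ := h
  obtain ⟨B1, V1, l1, hB1, hl1, hrefute⟩ :=
    exists_isLevelledModel (isPLogic_LS5 d L1) containsS5_LS5 hbot1 hK1 (f := leftOp) rfl hxs1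
  obtain ⟨B2, V2, l2, hB2, hl2, -⟩ :=
    exists_isLevelledModel (isPLogic_LS5 d L2) containsS5_LS5 hbot2 hK2 (f := rightOp) rfl hxs2
  obtain ⟨G, V, π, hG, hπ, htruth⟩ := exists_joint_model hB1 hB2
    (hl1.isScope isPartialInv_leftOp) (hl2.isScope isPartialInv_rightOp)
    (hl1.exists_classesMatch hl2 rfl rfl hxs)
    fun w' => (hl2.exists_classesMatch hl1 rfl rfl hxs w').imp fun _ => .symm
  obtain ⟨w, hw, hφw⟩ := hrefute φ hφ
  obtain ⟨g, rfl⟩ := hπ w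
  exact ⟨G, V, g, hG, mt (htruth φ g ⟨mem_subformulas_self φ, hw.ge⟩).1 hφw⟩

theorem IsGlobalCertificate.exists_countermodel (hK1 : GloballyKComplete (LS5 d L1))
    (hK2 : GloballyKComplete (LS5 d L2)) {φ ψ : PF (Option (M1 ⊕ M2))}
    {xs : List (List (PF (Option (M1 ⊕ M2))))}
    (hxs : xs ∈ coverLists (subformulas φ ++ subformulas ψ))
    (h : IsGlobalCertificate none (PGlobal (LS5 d L1) on surrogate leftOp c)
      (PGlobal (LS5 d L2) on surrogate rightOp c) φ ψ xs) :
    ∃ (G : KFrame (Option (M1 ⊕ M2))) (V : ℕ → G.W → Prop),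
      FrameFor G (fusionE (LS5 d L1) (LS5 d L2)) ∧ (∀ g, PVal (F := G) V φ g) ∧
        ∃ g, ¬ PVal (F := G) V ψ g := by
  obtain ⟨hxs1, hxs2, hψ⟩ := h
  obtain ⟨B1, V1, hB1, hα1, hrefute1⟩ := hK1.exists_model_refuting hψ
  have hev1 : IsModalEval none (B1.R none) (SurrogateVal B1 V1 leftOp c) :=
    isModalEval_surrogateVal rfl
  obtain ⟨w0⟩ := B1.ne
  obtain ⟨x0, hx0, -⟩ := hev1.someCover.1 (hα1 w0).1
  obtain ⟨B2, V2, hB2, hα2, hrefute2⟩ := hK2.exists_model_refuting (hxs2 x0 hx0)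
  have hev2 : IsModalEval none (B2.R none) (SurrogateVal B2 V2 rightOp c) :=
    isModalEval_surrogateVal rfl
  have hS {χ} (hχ : χ ∈ subformulas φ ++ subformulas ψ) :
      subformulas χ ⊆ subformulas φ ++ subformulas ψ := by
    obtain hχ | hχ := List.mem_append.1 hχ
    · exact List.subset_append_of_subset_left _ (subformulas_subset hχ)
    · exact List.subset_append_of_subset_right _ (subformulas_subset hχ)
  obtain ⟨G, V, π, hG, hπ, htruth⟩ := exists_joint_model hB1 hB2 (isScope_const hS)
    (isScope_const hS)
    (fun w => exists_classesMatch_of_someCover hev1 hxs (hα1 w).1 fun x hx =>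
      (hrefute2 _ (hxs2 x hx)).imp fun _ => not_not.1)
    (fun w' => (exists_classesMatch_of_someCover hev2 hxs (hα2 w').1 fun x hx =>
      (hrefute1 _ (hxs1 x hx)).imp fun _ => not_not.1).imp fun _ => .symm)
  obtain ⟨w, hψw⟩ := hrefute1 _ hψ
  obtain ⟨g, rfl⟩ := hπ w
  exact ⟨G, V, hG,
    fun g => (htruth φ g (List.mem_append_left _ (mem_subformulas_self φ))).2 (hα1 (π g)).2, g,
    mt (htruth ψ g (List.mem_append_right _ (mem_subformulas_self ψ))).1 hψw⟩

end Soundness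

section CertificateExistence

variable {A M : Type} {ι : M → A} {f : A → Option M} {c : PF A → ℕ} {K : Set (PF M)}
  {L : Set (PF A)}

theorem substP_mapOp_surrogate (hf : Function.IsPartialInv ι f) {σ : ℕ → PF A}
    (hσ : Function.LeftInverse σ c) (θ : PF A) : ((surrogate f c θ).mapOp ι).substP σ = θ := by
  induction θ with
  | atom n => exact hσ _
  | neg φ ih => exact congrArg neg ih
  | and φ ψ ihφ ihψ => exact congrArg₂ PF.and ihφ ihψ
  | box a φ ih =>
    obtain h | ⟨m, h⟩ := Option.eq_none_or_eq_some (f a)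
    · rw [surrogate, h]
      exact hσ _
    · rw [surrogate, h]
      exact congrArg₂ box ((hf m a).1 h) ih

theorem exists_leftInverse_code (hc : Function.Injective c) :
    ∃ σ : ℕ → PF A, Function.LeftInverse σ c :=
  have : Nonempty (PF A) := ⟨.top⟩
  hc.hasLeftInverse

variable (hf : Function.IsPartialInv ι f) (hc : Function.Injective c) (hL : IsPLogic L)
  (hKL : ∀ φ ∈ K, φ.mapOp ι ∈ L)
include hf hc hL hKL

theorem mem_of_surrogate_mem {θ : PF A} (h : surrogate f c θ ∈ K) : θ ∈ L := by
  obtain ⟨σ, hσ⟩ := exists_leftInverse_code hc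
  exact substP_mapOp_surrogate hf hσ θ ▸ hL.subst σ _ (hKL _ h)

theorem PGlobal.of_surrogate {α θ : PF A} (h : PGlobal K (surrogate f c α) (surrogate f c θ)) :
    PGlobal L α θ := by
  obtain ⟨σ, hσ⟩ := exists_leftInverse_code hc
  have := h.map (s := fun θ => (θ.mapOp ι).substP σ) (f := ι) (fun _ _ => rfl) (fun _ _ => rfl)
    fun φ hφ => hL.subst σ _ (hKL φ hφ)
  simpa only [substP_mapOp_surrogate hf hσ] using this

end CertificateExistence

section Fusion

variable {M1 M2 : Type} {d : DSem} {L1 : Set (PF M1)} {L2 : Set (PF M2)}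
  {K1 : Set (PF (Option M1))} {K2 : Set (PF (Option M2))}
  {c : PF (Option (M1 ⊕ M2)) → ℕ} (hc : Function.Injective c) {φ ψ : PF (Option (M1 ⊕ M2))}
include hc

theorem exists_isLocalCertificate (hφ : φ ∉ fusionE K1 K2) :
    ∃ xs ∈ coverLists (subformulas φ), IsLocalCertificate none (surrogate leftOp c ⁻¹' K1)
      (surrogate rightOp c ⁻¹' K2) φ xs := by
  have hL := isPLogic_fusionE K1 K2
  have hΘ := hL.isNormalTheory
  obtain ⟨xs, hmem, hxs, hsome⟩ := hΘ.exists_someCover_mem none (subformulas φ)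
  have of_imp {n θ} (h : imp (hereditary none (operators φ) (someCover none xs) n) θ ∈
      fusionE K1 K2) : θ ∈ fusionE K1 K2 :=
    hΘ.mp h (hΘ.hereditary_mem hsome n)
  have left {θ} : surrogate leftOp c θ ∈ K1 → θ ∈ fusionE K1 K2 :=
    mem_of_surrogate_mem isPartialInv_leftOp hc hL fun _ => mapOp_inl_mem_fusionE
  have right {θ} : surrogate rightOp c θ ∈ K2 → θ ∈ fusionE K1 K2 :=
    mem_of_surrogate_mem isPartialInv_rightOp hc hL fun _ => mapOp_inr_mem_fusionE
  exact ⟨xs, hmem, fun n _ x hx h => hxs x hx (of_imp (left h)),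
    fun n _ x hx h => hxs x hx (of_imp (right h)), fun h => hφ (of_imp (left h))⟩

theorem exists_isGlobalCertificate (hψ : ¬ PGlobal (fusionE K1 K2) φ ψ) :
    ∃ xs ∈ coverLists (subformulas φ ++ subformulas ψ), IsGlobalCertificate none
      (PGlobal K1 on surrogate leftOp c) (PGlobal K2 on surrogate rightOp c) φ ψ xs := by
  have hL := isPLogic_fusionE K1 K2
  have hΘ := hL.isNormalTheory.setOf_pGlobal φ
  obtain ⟨xs, hmem, hxs, hsome⟩ := hΘ.exists_someCover_mem none (subformulas φ ++ subformulas ψ)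
  have hα : PGlobal (fusionE K1 K2) φ (and (someCover none xs) φ) :=
    hΘ.mem_of_tautEval (l := [_, _]) (by simpa using ⟨hsome, .prem⟩) fun v hv => by
      simpa [tautEval] using hv
  have left {θ} (h : PGlobal K1 (surrogate leftOp c _) (surrogate leftOp c θ)) :
      PGlobal (fusionE K1 K2) φ θ :=
    hα.trans (h.of_surrogate isPartialInv_leftOp hc hL fun _ => mapOp_inl_mem_fusionE)
  have right {θ} (h : PGlobal K2 (surrogate rightOp c _) (surrogate rightOp c θ)) :
      PGlobal (fusionE K1 K2) φ θ :=
    hα.trans (h.of_surrogate isPartialInv_rightOp hc hL fun _ => mapOp_inr_mem_fusionE)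
  exact ⟨xs, hmem, fun x hx h => hxs x hx (left h), fun x hx h => hxs x hx (right h),
    fun h => hψ (left h)⟩

theorem notMem_fusionE_iff (hbot1 : bot ∉ LS5 d L1) (hbot2 : bot ∉ LS5 d L2)
    (hK1 : KComplete (LS5 d L1)) (hK2 : KComplete (LS5 d L2)) :
    φ ∉ fusionE (LS5 d L1) (LS5 d L2) ↔ ∃ xs ∈ coverLists (subformulas φ),
      IsLocalCertificate none (surrogate leftOp c ⁻¹' LS5 d L1)
        (surrogate rightOp c ⁻¹' LS5 d L2) φ xs := by
  refine ⟨exists_isLocalCertificate hc, fun ⟨xs, hxs, h⟩ hφ => ?_⟩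
  obtain ⟨G, V, g, hG, hg⟩ := h.exists_countermodel hbot1 hbot2 hK1 hK2 hxs
  exact hg (hG φ hφ V g)

theorem not_pGlobal_fusionE_iff (hK1 : GloballyKComplete (LS5 d L1))
    (hK2 : GloballyKComplete (LS5 d L2)) :
    ¬ PGlobal (fusionE (LS5 d L1) (LS5 d L2)) φ ψ ↔
      ∃ xs ∈ coverLists (subformulas φ ++ subformulas ψ), IsGlobalCertificate none
        (PGlobal (LS5 d L1) on surrogate leftOp c)
        (PGlobal (LS5 d L2) on surrogate rightOp c) φ ψ xs := by
  refine ⟨exists_isGlobalCertificate hc, fun ⟨xs, hxs, h⟩ hψ => ?_⟩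
  obtain ⟨G, V, hG, hφ, g, hg⟩ := h.exists_countermodel hK1 hK2 hxs
  exact hg (hψ.pVal hG hφ g)

theorem kComplete_fusionE (hbot1 : bot ∉ LS5 d L1) (hbot2 : bot ∉ LS5 d L2)
    (hK1 : KComplete (LS5 d L1)) (hK2 : KComplete (LS5 d L2)) :
    KComplete (fusionE (LS5 d L1) (LS5 d L2)) := by
  intro φ hvalid
  by_contra hφ
  obtain ⟨xs, hxs, h⟩ := exists_isLocalCertificate hc hφ
  obtain ⟨G, V, g, hG, hg⟩ := h.exists_countermodel hbot1 hbot2 hK1 hK2 hxs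
  exact hg (hvalid G hG V g)

theorem globallyKComplete_fusionE (hK1 : GloballyKComplete (LS5 d L1))
    (hK2 : GloballyKComplete (LS5 d L2)) :
    GloballyKComplete (fusionE (LS5 d L1) (LS5 d L2)) := by
  refine fun φ ψ => ⟨fun h G hG V hφ => h.pVal hG hφ, fun hvalid => ?_⟩
  by_contra hψ
  obtain ⟨xs, hxs, h⟩ := exists_isGlobalCertificate hc hψ
  obtain ⟨G, V, hG, hφ, g, hg⟩ := h.exists_countermodel hK1 hK2 hxs
  exact hg (hvalid G hG V hφ g)

end Fusion

/-! ### Primitive recursive operations on formulas -/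

namespace PF

theorem encode_injective {M : Type} {e : M → ℕ} (he : Function.Injective e) :
    Function.Injective (encode e) := by
  intro φ
  induction φ with
  | atom n => intro ψ h; cases ψ <;> simp_all [encode]
  | neg φ ih =>
    intro ψ h
    cases ψ <;> simp only [encode, Nat.pair_eq_pair] at h <;> try omega
    rw [ih h.2]
  | and φ ψ ihφ ihψ =>
    intro χ h
    cases χ <;> simp only [encode, Nat.pair_eq_pair] at h <;> try omega
    rw [ihφ h.2.1, ihψ h.2.2]
  | box m φ ih =>
    intro ψ h
    cases ψ <;> simp only [encode, Nat.pair_eq_pair] at h <;> try omega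
    rw [he h.2.1, ih h.2.2]

section DecodeFold

variable {σ τ : Type} (A : ℕ → σ) (N : σ → σ) (C : σ → σ → σ) (B : ℕ → σ → σ)

/-- One step of `decodeFold`, where `r` supplies the values at smaller codes. -/
def decodeStep (r : ℕ → Option σ) (n : ℕ) : Option σ :=
  let k := n.unpair.2
  if n.unpair.1 = 0 then some (A k)
  else if n.unpair.1 = 1 then (r k).map N
  else if n.unpair.1 = 2 then Option.map₂ C (r k.unpair.1) (r k.unpair.2)
  else if n.unpair.1 = 3 then (r k.unpair.2).map (B k.unpair.1)
  else none

/-- The value at the formula with code `n` of the function defined by recursion on formulas from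
`A`, `N`, `C`, `B`; it is `none` if `n` is not a code. -/
def decodeFold (n : ℕ) : Option σ :=
  decodeStep A N C B (fun m => if _h : m < n then decodeFold m else none) n

theorem decodeStep_map {A' : ℕ → τ} {N' : τ → τ} {C' : τ → τ → τ} {B' : ℕ → τ → τ} {g : σ → τ}
    (hA : ∀ n, g (A n) = A' n) (hN : ∀ a, g (N a) = N' (g a))
    (hC : ∀ a b, g (C a b) = C' (g a) (g b)) (hB : ∀ m a, g (B m a) = B' m (g a))
    (r : ℕ → Option σ) (n : ℕ) :
    (decodeStep A N C B r n).map g = decodeStep A' N' C' B' (fun m => (r m).map g) n := by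
  simp only [decodeStep]
  split_ifs
  · simp [hA]
  · cases r n.unpair.2 <;> simp [hN]
  · cases r n.unpair.2.unpair.1 <;> cases r n.unpair.2.unpair.2 <;> simp [hC]
  · cases r n.unpair.2.unpair.2 <;> simp [hB]
  · rfl

theorem decodeFold_map {A' : ℕ → τ} {N' : τ → τ} {C' : τ → τ → τ} {B' : ℕ → τ → τ} {g : σ → τ}
    (hA : ∀ n, g (A n) = A' n) (hN : ∀ a, g (N a) = N' (g a))
    (hC : ∀ a b, g (C a b) = C' (g a) (g b)) (hB : ∀ m a, g (B m a) = B' m (g a)) (n : ℕ) :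
    (decodeFold A N C B n).map g = decodeFold A' N' C' B' n := by
  induction n using Nat.strong_induction_on with
  | _ n ih =>
    rw [decodeFold, decodeFold, decodeStep_map A N C B hA hN hC hB]
    congr 1
    funext m
    split_ifs with h
    · exact ih m h
    · rfl

theorem lt_pair_of_pos {i : ℕ} (hi : 0 < i) (n : ℕ) : n < Nat.pair i n :=
  (Nat.lt_add_of_pos_left hi).trans_le (Nat.add_le_pair i n)

theorem decodeFold_encode (φ : PF ℕ) : decodeFold atom neg and box (encode id φ) = some φ := by
  induction φ with
  | atom n => rw [decodeFold]; simp [decodeStep, encode]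
  | neg φ ih =>
    have lt := lt_pair_of_pos one_pos (encode id φ)
    rw [decodeFold]
    simp [decodeStep, encode, lt, ih]
  | and φ ψ ihφ ihψ =>
    have lt := lt_pair_of_pos two_pos (Nat.pair (encode id φ) (encode id ψ))
    have ltφ := (Nat.left_le_pair (encode id φ) (encode id ψ)).trans_lt lt
    have ltψ := (Nat.right_le_pair (encode id φ) (encode id ψ)).trans_lt lt
    rw [decodeFold]
    simp [decodeStep, encode, ltφ, ltψ, ihφ, ihψ]
  | box m φ ih =>
    have lt := (Nat.right_le_pair m (encode id φ)).trans_lt (lt_pair_of_pos three_pos _)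
    rw [decodeFold]
    simp [decodeStep, encode, lt, ih]

variable [Primcodable σ] {A N C B}

theorem primrec_decodeStep (hA : Primrec A) (hN : Primrec N) (hC : Primrec₂ C) (hB : Primrec₂ B) :
    Primrec fun l : List (Option σ) =>
      decodeStep A N C B (fun m => l.getD m none) l.length := by
  have code : Primrec fun l : List (Option σ) => l.length.unpair :=
    Primrec.unpair.comp Primrec.list_length
  have arg := Primrec.snd.comp code
  have arg₁ := Primrec.fst.comp (Primrec.unpair.comp arg)
  have arg₂ := Primrec.snd.comp (Primrec.unpair.comp arg)
  have value {k : List (Option σ) → ℕ} (hk : Primrec k) :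
      Primrec fun l : List (Option σ) => l.getD (k l) none :=
    (Primrec.list_getD none).comp Primrec.id hk
  have tag (i : ℕ) : PrimrecPred fun l : List (Option σ) => l.length.unpair.1 = i :=
    Primrec.eq.comp (Primrec.fst.comp code) (Primrec.const i)
  refine .ite (tag 0) (Primrec.option_some.comp (hA.comp arg)) <|
    .ite (tag 1) (Primrec.option_map (value arg) (hN.comp Primrec.snd)) <|
    .ite (tag 2) ?_ <|
    .ite (tag 3) (Primrec.option_map (value arg₂) (hB.comp (arg₁.comp Primrec.fst) Primrec.snd))
      (Primrec.const none)
  exact Primrec.option_bind (value arg₁) <| Primrec.option_map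
    ((value arg₂).comp Primrec.fst) (hC.comp (Primrec.snd.comp Primrec.fst) Primrec.snd)

theorem primrec_decodeFold (hA : Primrec A) (hN : Primrec N) (hC : Primrec₂ C)
    (hB : Primrec₂ B) : Primrec (decodeFold A N C B) := by
  have := Primrec.nat_strong_rec (fun _ : Unit => decodeFold A N C B)
    (g := fun _ l => some (decodeStep A N C B (fun m => l.getD m none) l.length))
    (Primrec.option_some.comp ((primrec_decodeStep hA hN hC hB).comp Primrec.snd)) fun _ n => by
      rw [decodeFold, List.length_map, List.length_range]
      congr 2
      funext m
      by_cases h : m < n <;> simp [List.getD, h]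
  exact this.comp (Primrec.const ()) Primrec.id

end DecodeFold

instance : Encodable (PF ℕ) where
  encode := encode id
  decode := decodeFold atom neg and box
  encodek := decodeFold_encode

instance : Primcodable (PF ℕ) where
  prim := by
    have h : Primrec (decodeFold (Nat.pair 0) (Nat.pair 1) (fun a b => Nat.pair 2 (Nat.pair a b))
        fun m a => Nat.pair 3 (Nat.pair m a)) :=
      primrec_decodeFold (Primrec₂.natPair.comp (Primrec.const 0) Primrec.id)
        (Primrec₂.natPair.comp (Primrec.const 1) Primrec.id)
        (Primrec₂.natPair.comp (Primrec.const 2) Primrec₂.natPair)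
        (Primrec₂.natPair.comp (Primrec.const 3) Primrec₂.natPair)
    refine (Primrec.nat_iff.1 (Primrec.encode.comp h)).of_eq fun n => ?_
    have map_encode : (decodeFold atom neg and box n).map (encode id) =
        decodeFold (Nat.pair 0) (Nat.pair 1) (fun a b => Nat.pair 2 (Nat.pair a b))
          (fun m a => Nat.pair 3 (Nat.pair m a)) n :=
      decodeFold_map (g := encode id) _ _ _ _ (fun _ => rfl) (fun _ => rfl) (fun _ _ => rfl)
        (fun _ _ => rfl) n
    rw [← map_encode]
    change _ = Encodable.encode (decodeFold atom neg and box n)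
    cases decodeFold atom neg and box n <;> rfl

section Primrec

theorem primrec_atom : Primrec (atom : ℕ → PF ℕ) :=
  Primrec.encode_iff.1 (Primrec₂.natPair.comp (Primrec.const 0) Primrec.id)

theorem primrec_neg : Primrec (neg : PF ℕ → PF ℕ) :=
  Primrec.encode_iff.1 (Primrec₂.natPair.comp (Primrec.const 1) Primrec.encode)

theorem primrec_and : Primrec₂ (and : PF ℕ → PF ℕ → PF ℕ) :=
  Primrec.encode_iff.1 (Primrec₂.natPair.comp (Primrec.const 2)
    (Primrec₂.natPair.comp (Primrec.encode.comp Primrec.fst) (Primrec.encode.comp Primrec.snd)))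

theorem primrec_box : Primrec₂ (box : ℕ → PF ℕ → PF ℕ) :=
  Primrec.encode_iff.1 (Primrec₂.natPair.comp (Primrec.const 3)
    (Primrec₂.natPair.comp Primrec.fst (Primrec.encode.comp Primrec.snd)))

theorem primrec_of_fold {σ : Type} [Primcodable σ] {f : PF ℕ → σ} {A : ℕ → σ} {N : σ → σ}
    {C : σ → σ → σ} {B : ℕ → σ → σ} (hA : Primrec A) (hN : Primrec N) (hC : Primrec₂ C)
    (hB : Primrec₂ B) (hatom : ∀ n, f (atom n) = A n) (hneg : ∀ φ, f (neg φ) = N (f φ))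
    (hand : ∀ φ ψ, f (and φ ψ) = C (f φ) (f ψ)) (hbox : ∀ m φ, f (box m φ) = B m (f φ)) :
    Primrec f := by
  refine Primrec.option_some_iff.1 (((primrec_decodeFold hA hN hC hB).comp Primrec.encode).of_eq
    fun φ => ?_)
  rw [← decodeFold_map _ _ _ _ hatom hneg hand hbox]
  exact congrArg (Option.map f) (decodeFold_encode φ)

theorem primrec_of_rec {σ : Type} [Primcodable σ] {f : PF ℕ → σ} {A : ℕ → σ} {N : PF ℕ × σ → σ}
    {C : PF ℕ × σ → PF ℕ × σ → σ} {B : ℕ → PF ℕ × σ → σ} (hA : Primrec A) (hN : Primrec N)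
    (hC : Primrec₂ C) (hB : Primrec₂ B) (hatom : ∀ n, f (atom n) = A n)
    (hneg : ∀ φ, f (neg φ) = N (φ, f φ))
    (hand : ∀ φ ψ, f (and φ ψ) = C (φ, f φ) (ψ, f ψ))
    (hbox : ∀ m φ, f (box m φ) = B m (φ, f φ)) : Primrec f := by
  have pair_rec : Primrec fun φ => (φ, f φ) :=
    primrec_of_fold (A := fun n => (atom n, A n)) (N := fun a => (neg a.1, N a))
      (C := fun a b => (and a.1 b.1, C a b)) (B := fun m a => (box m a.1, B m a))
      (primrec_atom.pair hA) ((primrec_neg.comp Primrec.fst).pair hN)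
      ((primrec_and.comp (Primrec.fst.comp Primrec.fst) (Primrec.fst.comp Primrec.snd)).pair hC)
      ((primrec_box.comp Primrec.fst (Primrec.fst.comp Primrec.snd)).pair hB)
      (fun n => by rw [hatom]) (fun φ => by rw [hneg]) (fun φ ψ => by rw [hand])
      (fun m φ => by rw [hbox])
  exact Primrec.snd.comp pair_rec

theorem primrec_imp : Primrec₂ (imp : PF ℕ → PF ℕ → PF ℕ) :=
  primrec_neg.comp (primrec_and.comp Primrec.fst (primrec_neg.comp Primrec.snd))

theorem primrec_dia : Primrec₂ (dia : ℕ → PF ℕ → PF ℕ) :=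
  primrec_neg.comp (primrec_box.comp Primrec.fst (primrec_neg.comp Primrec.snd))

theorem primrec_mapOp {f : ℕ → ℕ} (hf : Primrec f) : Primrec (mapOp f) :=
  primrec_of_fold (B := fun m φ => box (f m) φ) primrec_atom primrec_neg primrec_and
    (primrec_box.comp (hf.comp Primrec.fst) Primrec.snd)
    (fun _ => rfl) (fun _ => rfl) (fun _ _ => rfl) (fun _ _ => rfl)

theorem primrec_operators : Primrec (operators : PF ℕ → List ℕ) :=
  primrec_of_fold (Primrec.const []) Primrec.id Primrec.list_append Primrec.list_cons
    (fun _ => rfl) (fun _ => rfl) (fun _ _ => rfl) (fun _ _ => rfl)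

theorem primrec_subformulas : Primrec (subformulas : PF ℕ → List (PF ℕ)) :=
  primrec_of_rec (N := fun a => neg a.1 :: a.2) (C := fun a b => and a.1 b.1 :: (a.2 ++ b.2))
    (B := fun m a => box m a.1 :: a.2)
    (Primrec.list_cons.comp primrec_atom (Primrec.const []))
    (Primrec.list_cons.comp (primrec_neg.comp Primrec.fst) Primrec.snd)
    (Primrec.list_cons.comp
      (primrec_and.comp (Primrec.fst.comp Primrec.fst) (Primrec.fst.comp Primrec.snd))
      (Primrec.list_append.comp (Primrec.snd.comp Primrec.fst) (Primrec.snd.comp Primrec.snd)))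
    (Primrec.list_cons.comp (primrec_box.comp Primrec.fst (Primrec.fst.comp Primrec.snd))
      (Primrec.snd.comp Primrec.snd))
    (fun _ => rfl) (fun _ => rfl) (fun _ _ => rfl) (fun _ _ => rfl)

theorem primrec_surrogate {f : ℕ → Option ℕ} {c : PF ℕ → ℕ} (hf : Primrec f) (hc : Primrec c) :
    Primrec (surrogate f c) := by
  have box' : Primrec₂ fun (m : ℕ) (a : PF ℕ × PF ℕ) => box m a.1 :=
    primrec_box.comp Primrec.fst (Primrec.fst.comp Primrec.snd)
  refine primrec_of_rec (A := fun n => atom (c (atom n))) (N := fun a => neg a.2)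
    (C := fun a b => and a.2 b.2)
    (B := fun m a => Option.casesOn (f m) (atom (c (box m a.1))) fun m' => box m' a.2)
    (primrec_atom.comp (hc.comp primrec_atom)) (primrec_neg.comp Primrec.snd)
    (primrec_and.comp (Primrec.snd.comp Primrec.fst) (Primrec.snd.comp Primrec.snd)) ?_
    (fun _ => rfl) (fun _ => rfl) (fun _ _ => rfl) fun m φ => ?_
  · exact Primrec.option_casesOn (hf.comp Primrec.fst) (primrec_atom.comp (hc.comp box'))
      (primrec_box.comp Primrec.snd (Primrec.snd.comp (Primrec.snd.comp Primrec.fst)))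
  · rw [surrogate]
    cases f m <;> rfl

theorem primrec_conj : Primrec (conj : List (PF ℕ) → PF ℕ) :=
  Primrec.list_foldr (h := fun _ p => and p.1 p.2) Primrec.id (Primrec.const top)
    (primrec_and.comp (Primrec.fst.comp Primrec.snd) (Primrec.snd.comp Primrec.snd))

theorem primrec_disj : Primrec (disj : List (PF ℕ) → PF ℕ) :=
  primrec_neg.comp (primrec_conj.comp
    (Primrec.list_map Primrec.id (primrec_neg.comp Primrec.snd)))

theorem primrec_types : Primrec (types : List (PF ℕ) → List (PF ℕ)) := by
  have split : Primrec₂ fun (p : List (PF ℕ) × PF ℕ × List (PF ℕ)) (t : PF ℕ) =>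
      [and p.2.1 t, and (neg p.2.1) t] := by
    have head : Primrec fun q : (List (PF ℕ) × PF ℕ × List (PF ℕ)) × PF ℕ => q.1.2.1 :=
      Primrec.fst.comp (Primrec.snd.comp Primrec.fst)
    exact Primrec.list_cons.comp (primrec_and.comp head Primrec.snd) (Primrec.list_cons.comp
      (primrec_and.comp (primrec_neg.comp head) Primrec.snd) (Primrec.const []))
  refine (Primrec.list_foldr (h := fun _ p => p.2.flatMap fun t => [and p.1 t, and (neg p.1) t])
    Primrec.id (Primrec.const [top]) (Primrec.list_flatMap (Primrec.snd.comp Primrec.snd)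
      split).to₂).of_eq fun S => ?_
  induction S with
  | nil => rfl
  | cons a S ih => exact congrArg (List.flatMap _) ih

theorem primrec_cover : Primrec₂ (cover : ℕ → List (PF ℕ) → PF ℕ) :=
  primrec_and.comp
    (primrec_conj.comp (Primrec.list_map Primrec.snd
      (primrec_dia.comp (Primrec.fst.comp Primrec.fst) Primrec.snd)))
    (primrec_box.comp Primrec.fst (primrec_disj.comp Primrec.snd))

theorem primrec_someCover : Primrec₂ (someCover : ℕ → List (List (PF ℕ)) → PF ℕ) :=
  primrec_disj.comp (Primrec.list_map Primrec.snd
    (primrec_cover.comp (Primrec.fst.comp Primrec.fst) Primrec.snd))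

theorem primrec_hereditary (e : ℕ) :
    Primrec fun p : (List ℕ × PF ℕ) × ℕ => hereditary e p.1.1 p.1.2 p.2 := by
  have next : Primrec₂ fun (p : (List ℕ × PF ℕ) × ℕ) (q : ℕ × PF ℕ) =>
      box e (and p.1.2 (conj (p.1.1.map fun m => box m q.2))) :=
    primrec_box.comp (Primrec.const e) (primrec_and.comp
      (Primrec.snd.comp (Primrec.fst.comp Primrec.fst))
      (primrec_conj.comp (Primrec.list_map (Primrec.fst.comp (Primrec.fst.comp Primrec.fst))
        (primrec_box.comp Primrec.snd (Primrec.snd.comp (Primrec.snd.comp Primrec.fst))))))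
  refine (Primrec.nat_rec' Primrec.snd (Primrec.const top) next).of_eq fun p => ?_
  obtain ⟨p, n⟩ := p
  induction n with
  | zero => rfl
  | succ n ih => rw [hereditary, ← ih]

end Primrec

end PF

theorem primrec_sublists' {α : Type} [Primcodable α] :
    Primrec (List.sublists' : List α → List (List α)) := by
  have extend : Primrec₂ fun (_ : List α) (p : α × List (List α)) =>
      p.2 ++ p.2.map fun l => p.1 :: l :=
    Primrec.list_append.comp (Primrec.snd.comp Primrec.snd)
      (Primrec.list_map (Primrec.snd.comp Primrec.snd) (Primrec.list_cons.comp
        (Primrec.fst.comp (Primrec.snd.comp Primrec.fst)) Primrec.snd))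
  refine (Primrec.list_foldr Primrec.id (Primrec.const [[]]) extend).of_eq fun l => ?_
  induction l with
  | nil => rfl
  | cons a l ih =>
    rw [List.sublists'_cons, ← ih]
    rfl

theorem primrec_coverLists : Primrec (coverLists : List (PF ℕ) → List (List (List (PF ℕ)))) :=
  primrec_sublists'.comp (primrec_sublists'.comp PF.primrec_types)

/-! ### Computable predicates -/

section ComputablePred

variable {α β : Type} [Primcodable α] [Primcodable β]

theorem computablePred_comp {p : β → Prop} (hp : ComputablePred p) {f : α → β}
    (hf : Computable f) : ComputablePred fun a => p (f a) := by
  obtain ⟨g, hg, rfl⟩ := ComputablePred.computable_iff.1 hp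
  exact ComputablePred.computable_iff.2 ⟨_, hg.comp hf, rfl⟩

theorem computablePred_and {p q : α → Prop} (hp : ComputablePred p) (hq : ComputablePred q) :
    ComputablePred fun a => p a ∧ q a := by
  obtain ⟨f, hf, rfl⟩ := ComputablePred.computable_iff.1 hp
  obtain ⟨g, hg, rfl⟩ := ComputablePred.computable_iff.1 hq
  exact ComputablePred.computable_iff.2 ⟨_, Primrec.and.to_comp.comp hf hg, by simp⟩

theorem computablePred_or {p q : α → Prop} (hp : ComputablePred p) (hq : ComputablePred q) :
    ComputablePred fun a => p a ∨ q a :=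
  (computablePred_and hp.not hq.not).not.of_eq fun _ => by tauto

theorem computablePred_exists_mem_option {p : β → Prop} (hp : ComputablePred p)
    {o : α → Option β} (ho : Computable o) : ComputablePred fun a => ∃ b ∈ o a, p b := by
  obtain ⟨f, hf, rfl⟩ := ComputablePred.computable_iff.1 hp
  have hf : Computable₂ fun (_ : α) b => f b := hf.comp Computable.snd
  refine ComputablePred.computable_iff.2
    ⟨_, Computable.option_casesOn ho (Computable.const false) hf, funext fun a => ?_⟩
  cases o a <;> simp

theorem computablePred_forall_mem {p : α → β → Prop}
    (hp : ComputablePred fun q : α × β => p q.1 q.2) {l : α → List β} (hl : Computable l) :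
    ComputablePred fun a => ∀ b ∈ l a, p a b := by
  obtain ⟨f, hf, hpf⟩ := ComputablePred.computable_iff.1 hp
  have hpf (a b) : p a b ↔ f (a, b) := iff_of_eq (congrFun hpf (a, b))
  have check : Computable₂ fun a (q : ℕ × Bool) =>
      q.2 && (Option.casesOn (l a)[q.1]? true fun b => f (a, b) : Bool) :=
    Primrec.and.to_comp.comp (Computable.snd.comp Computable.snd) <| Computable.option_casesOn
      (Computable.list_getElem?.comp (hl.comp Computable.fst) (Computable.fst.comp Computable.snd))
      (Computable.const true) (hf.comp ((Computable.fst.comp Computable.fst).pair Computable.snd))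
  refine ComputablePred.computable_iff.2 ⟨_, Computable.nat_rec
    (Computable.list_length.comp hl) (Computable.const true) check, funext fun a => ?_⟩
  have check_take (n : ℕ) : (Nat.rec true (fun i r =>
      r && (Option.casesOn (l a)[i]? true fun b => f (a, b) : Bool)) n : Bool) ↔
        ∀ b ∈ (l a).take n, p a b := by
    induction n with
    | zero => simp
    | succ n ih =>
      rw [List.take_add_one, List.forall_mem_append, ← ih]
      rcases h : (l a)[n]? with _ | b <;> simp [hpf, h]
  exact propext ((List.take_length (l := l a) ▸ check_take (l a).length).symm)

theorem computablePred_exists_mem {p : α → β → Prop}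
    (hp : ComputablePred fun q : α × β => p q.1 q.2) {l : α → List β} (hl : Computable l) :
    ComputablePred fun a => ∃ b ∈ l a, p a b :=
  (computablePred_forall_mem (p := fun a b => ¬ p a b) hp.not hl).not.of_eq fun a => by simp

theorem computablePred_image_iff {g : α → β} {h : β → Option α} (hgh : Function.IsPartialInv g h)
    (hg : Computable g) (hh : Computable h) {s : Set α} :
    ComputablePred (· ∈ g '' s) ↔ ComputablePred (· ∈ s) :=
  ⟨fun hs => (computablePred_comp hs hg).of_eq fun _ => hgh.injective.mem_set_image,
    fun hs => (computablePred_exists_mem_option hs hh).of_eq fun b => by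
      simp [hgh _ b, and_comm]⟩

end ComputablePred

namespace PF

theorem encode_mapOp {M : Type} (e : M → ℕ) (φ : PF M) :
    Encodable.encode (mapOp e φ) = encode e φ := by
  change encode id (mapOp e φ) = _
  induction φ <;> simp_all [mapOp, encode]

theorem mapOp_injective {M : Type} {e : M → ℕ} (he : Function.Injective e) :
    Function.Injective (mapOp e) := fun φ ψ h =>
  encode_injective he (by rw [← encode_mapOp, h, encode_mapOp])

theorem mapOp_mapOp {M M' M'' : Type} (f : M → M') (g : M' → M'') (φ : PF M) :
    mapOp g (mapOp f φ) = mapOp (g ∘ f) φ := by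
  induction φ <;> simp_all [mapOp]

theorem isPartialInv_encode : Function.IsPartialInv (Encodable.encode : PF ℕ → ℕ)
    (Encodable.decode₂ (PF ℕ)) :=
  fun _ _ => Encodable.mem_decode₂

end PF

theorem decidableP_iff {M : Type} {e : M → ℕ} {L : Set (PF M)} :
    DecidableP e L ↔ ComputablePred (· ∈ mapOp e '' L) := by
  rw [← computablePred_image_iff isPartialInv_encode Computable.encode Primrec.decode₂.to_comp,
    Set.image_image]
  simp only [encode_mapOp]
  rfl

theorem globallyDecidableP_iff {M : Type} {e : M → ℕ} {L : Set (PF M)} :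
    GloballyDecidableP e L ↔ ComputablePred fun p : PF ℕ × PF ℕ =>
      Relation.Map (PGlobal L) (mapOp e) (mapOp e) p.1 p.2 := by
  have inv : Function.IsPartialInv (Prod.map Encodable.encode Encodable.encode)
      fun p : ℕ × ℕ => (Encodable.decode₂ (PF ℕ) p.1).bind fun φ =>
        (Encodable.decode₂ (PF ℕ) p.2).map fun ψ => (φ, ψ) := fun q p => by
    simp [Option.bind_eq_some_iff, isPartialInv_encode _ _, Prod.ext_iff]
  refine .trans (iff_of_eq (congrArg ComputablePred (funext fun p => propext ?_)))
    (computablePred_image_iff inv (s := {p | Relation.Map (PGlobal L) (mapOp e) (mapOp e) p.1 p.2})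
      ((Computable.encode.comp Computable.fst).pair (Computable.encode.comp Computable.snd))
      (Computable.option_bind (Primrec.decode₂.to_comp.comp Computable.fst) <|
        Computable.option_map (Primrec.decode₂.to_comp.comp (Computable.snd.comp Computable.fst))
          ((Computable.snd.comp Computable.fst).pair Computable.snd)))
  constructor
  · rintro ⟨φ, ψ, h, hφ, hψ⟩
    exact ⟨(mapOp e φ, mapOp e ψ), ⟨φ, ψ, h, rfl, rfl⟩,
      Prod.ext ((encode_mapOp e φ).trans hφ) ((encode_mapOp e ψ).trans hψ)⟩
  · rintro ⟨⟨_, _⟩, ⟨φ, ψ, h, rfl, rfl⟩, rfl⟩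
    exact ⟨φ, ψ, h, (encode_mapOp e φ).symm, (encode_mapOp e ψ).symm⟩

/-! ### Renaming operators by their numbers -/

namespace PF

variable {M A : Type} (g : A → ℕ)

theorem mapOp_neg (φ : PF A) : mapOp g (neg φ) = neg (mapOp g φ) := rfl

theorem mapOp_and (φ ψ : PF A) : mapOp g (and φ ψ) = and (mapOp g φ) (mapOp g ψ) := rfl

theorem mapOp_imp (φ ψ : PF A) : mapOp g (imp φ ψ) = imp (mapOp g φ) (mapOp g ψ) := rfl

theorem mapOp_conj (l : List (PF A)) : mapOp g (conj l) = conj (l.map (mapOp g)) := by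
  induction l with
  | nil => rfl
  | cons a l ih => exact congrArg (and (mapOp g a)) ih

theorem mapOp_disj (l : List (PF A)) : mapOp g (disj l) = disj (l.map (mapOp g)) := by
  rw [disj, mapOp, mapOp_conj, disj, List.map_map, List.map_map]
  rfl

theorem mapOp_cover (e : A) (x : List (PF A)) :
    mapOp g (cover e x) = cover (g e) (x.map (mapOp g)) := by
  rw [cover, mapOp, mapOp_conj, mapOp, mapOp_disj, cover, List.map_map, List.map_map]
  rfl

theorem mapOp_someCover (e : A) (xs : List (List (PF A))) :
    mapOp g (someCover e xs) = someCover (g e) (xs.map (List.map (mapOp g))) := by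
  rw [someCover, mapOp_disj, someCover, List.map_map, List.map_map]
  exact congrArg disj (List.map_congr_left fun x _ => mapOp_cover g e x)

theorem mapOp_hereditary (e : A) (os : List A) (χ : PF A) (n : ℕ) :
    mapOp g (hereditary e os χ n) = hereditary (g e) (os.map g) (mapOp g χ) n := by
  induction n with
  | zero => rfl
  | succ n ih =>
    rw [hereditary, hereditary, mapOp, mapOp, mapOp_conj, List.map_map, List.map_map, ← ih]
    rfl

theorem subformulas_mapOp (φ : PF A) :
    subformulas (mapOp g φ) = (subformulas φ).map (mapOp g) := by
  induction φ <;> simp_all [subformulas, mapOp]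

theorem operators_mapOp (φ : PF A) : operators (mapOp g φ) = (operators φ).map g := by
  induction φ <;> simp_all [operators, mapOp]

theorem types_map_mapOp (S : List (PF A)) :
    types (S.map (mapOp g)) = (types S).map (mapOp g) := by
  induction S with
  | nil => rfl
  | cons a S ih =>
    rw [List.map_cons, types, types, ih, List.flatMap_map, List.map_flatMap]
    rfl

variable {g}

theorem mem_range_mapOp_iff {ξ : PF ℕ} :
    ξ ∈ Set.range (mapOp g) ↔ ∀ k ∈ operators ξ, k ∈ Set.range g := by
  constructor
  · rintro ⟨φ, rfl⟩ k hk
    rw [operators_mapOp] at hk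
    obtain ⟨o, -, rfl⟩ := List.mem_map.1 hk
    exact ⟨o, rfl⟩
  · intro h
    induction ξ with
    | atom n => exact ⟨atom n, rfl⟩
    | neg ξ ih =>
      obtain ⟨φ, rfl⟩ := ih h
      exact ⟨neg φ, rfl⟩
    | and ξ η ihξ ihη =>
      obtain ⟨hξ, hη⟩ := List.forall_mem_append.1 h
      obtain ⟨⟨φ, rfl⟩, ψ, rfl⟩ := And.intro (ihξ hξ) (ihη hη)
      exact ⟨and φ ψ, rfl⟩
    | box k ξ ih =>
      obtain ⟨⟨o, rfl⟩, hξ⟩ := List.forall_mem_cons.1 h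
      obtain ⟨φ, rfl⟩ := ih hξ
      exact ⟨box o φ, rfl⟩

theorem surrogate_mapOp {f : A → Option M} {h : M → ℕ} {F : ℕ → Option ℕ}
    (hF : ∀ a, F (g a) = (f a).map h) (φ : PF A) :
    surrogate F Encodable.encode (mapOp g φ) = mapOp h (surrogate f (encode g) φ) := by
  induction φ with
  | atom n => rfl
  | neg φ ih => exact congrArg neg ih
  | and φ ψ ihφ ihψ => exact congrArg₂ and ihφ ihψ
  | box a φ ih =>
    rw [surrogate, mapOp, surrogate, hF]
    cases f a with
    | none => exact congrArg atom (encode_mapOp g (box a φ))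
    | some m => exact congrArg (box (h m)) ih

end PF

theorem coverLists_map_mapOp {A : Type} (g : A → ℕ) (S : List (PF A)) :
    coverLists (S.map (mapOp g)) = (coverLists S).map (List.map (List.map (mapOp g))) := by
  rw [coverLists, coverLists, types_map_mapOp, List.sublists'_map, List.sublists'_map]

section CertificateRenaming

variable {A : Type} {g : A → ℕ} {e : A} {φ ψ : PF A} {xs : List (List (PF A))}

theorem coversConsistent_mapOp_iff {Θ : Set (PF ℕ)} :
    CoversConsistent (g e) Θ (mapOp g φ) (xs.map (List.map (mapOp g))) ↔
      CoversConsistent e (mapOp g ⁻¹' Θ) φ xs := by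
  simp only [CoversConsistent, List.forall_mem_map, subformulas_mapOp, operators_mapOp,
    List.length_map, ← mapOp_someCover, ← mapOp_hereditary, ← mapOp_cover, ← mapOp_imp, ← mapOp_neg,
    Set.mem_preimage]

theorem isLocalCertificate_mapOp_iff {Θ1 Θ2 : Set (PF ℕ)} :
    IsLocalCertificate (g e) Θ1 Θ2 (mapOp g φ) (xs.map (List.map (mapOp g))) ↔
      IsLocalCertificate e (mapOp g ⁻¹' Θ1) (mapOp g ⁻¹' Θ2) φ xs := by
  simp only [IsLocalCertificate, coversConsistent_mapOp_iff, subformulas_mapOp, operators_mapOp,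
    List.length_map, ← mapOp_someCover, ← mapOp_hereditary, ← mapOp_imp, Set.mem_preimage]

theorem isGlobalCertificate_mapOp_iff {Γ1 Γ2 : PF ℕ → PF ℕ → Prop} :
    IsGlobalCertificate (g e) Γ1 Γ2 (mapOp g φ) (mapOp g ψ) (xs.map (List.map (mapOp g))) ↔
      IsGlobalCertificate e (Γ1 on mapOp g) (Γ2 on mapOp g) φ ψ xs := by
  simp only [IsGlobalCertificate, List.forall_mem_map, ← mapOp_someCover, ← mapOp_cover,
    ← mapOp_and, ← mapOp_neg, Function.onFun]

end CertificateRenaming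

/-! ### Transfer of decidability -/

theorem eOpt_injective {M : Type} {e : M → ℕ} (he : Function.Injective e) :
    Function.Injective (eOpt e) := by
  rintro (_ | a) (_ | b) h <;> dsimp only [eOpt] at h <;> try omega
  · rfl
  · rw [he (Nat.succ_injective h)]

theorem eOptSum_injective {M1 M2 : Type} {e1 : M1 → ℕ} {e2 : M2 → ℕ}
    (he1 : Function.Injective e1) (he2 : Function.Injective e2) :
    Function.Injective (eOptSum e1 e2) := by
  rintro (_ | a | a) (_ | b | b) h <;> dsimp only [eOptSum] at h <;> try omega
  · rfl
  · rw [he1 (by omega : e1 a = e1 b)]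
  · rw [he2 (by omega : e2 a = e2 b)]

/-- Primitive recursive functions that represent, on the numbers assigned to operators by `h`
and `g`, an inclusion `ι` of signatures and its partial inverse `f`. -/
structure InclusionCode {M A : Type} (h : M → ℕ) (g : A → ℕ) (ι : M → A) (f : A → Option M) where
  code : ℕ → ℕ
  decode : ℕ → Option ℕ
  isPartialInv_code : Function.IsPartialInv code decode
  code_apply : ∀ m, code (h m) = g (ι m)
  decode_apply : ∀ a, decode (g a) = (f a).map h
  primrec_code : Primrec code
  primrec_decode : Primrec decode

namespace InclusionCode

variable {M A : Type} {h : M → ℕ} {g : A → ℕ} {ι : M → A} {f : A → Option M}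
  (c : InclusionCode h g ι f) {K : Set (PF M)} {L : Set (PF A)}
include c

theorem mapOp_code (φ : PF M) : mapOp c.code (mapOp h φ) = mapOp g (mapOp ι φ) := by
  rw [mapOp_mapOp, mapOp_mapOp]
  exact congrArg (mapOp · φ) (funext c.code_apply)

theorem mem_range_of_code {k : ℕ} (hk : c.code k ∈ Set.range g) : k ∈ Set.range h := by
  obtain ⟨a, ha⟩ := hk
  have : (f a).map h = some k :=
    (c.decode_apply a).symm.trans (ha ▸ (c.isPartialInv_code _ _).2 rfl)
  obtain ⟨m, -, hm⟩ := Option.map_eq_some_iff.1 this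
  exact ⟨m, hm⟩

theorem mem_range_of_decode {k : ℕ} (hk : ∃ j ∈ c.decode k, j ∈ Set.range h) :
    k ∈ Set.range g := by
  obtain ⟨_, hj, m, rfl⟩ := hk
  exact ⟨ι m, (c.code_apply m).symm.trans ((c.isPartialInv_code _ _).1 hj)⟩

theorem exists_of_mapOp_code_eq (hg : Function.Injective g) {ξ : PF ℕ} {χ : PF A}
    (hξ : mapOp c.code ξ = mapOp g χ) : ∃ φ, mapOp h φ = ξ ∧ mapOp ι φ = χ := by
  have : ξ ∈ Set.range (mapOp h) := mem_range_mapOp_iff.2 fun k hk =>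
    c.mem_range_of_code <| mem_range_mapOp_iff.1 ⟨χ, hξ.symm⟩ _ <|
      operators_mapOp c.code ξ ▸ List.mem_map_of_mem hk
  obtain ⟨φ, rfl⟩ := this
  exact ⟨φ, rfl, mapOp_injective hg ((c.mapOp_code φ).symm.trans hξ)⟩

theorem decidableP (hg : Function.Injective g) (hKL : ∀ {φ}, mapOp ι φ ∈ L ↔ φ ∈ K)
    (hL : DecidableP g L) : DecidableP h K := by
  refine decidableP_iff.2 ((computablePred_comp (decidableP_iff.1 hL)
    (primrec_mapOp c.primrec_code).to_comp).of_eq fun ξ => ⟨?_, ?_⟩)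
  · rintro ⟨χ, hχ, hξ⟩
    obtain ⟨φ, rfl, rfl⟩ := c.exists_of_mapOp_code_eq hg hξ.symm
    exact ⟨φ, hKL.1 hχ, rfl⟩
  · rintro ⟨φ, hφ, rfl⟩
    exact ⟨mapOp ι φ, hKL.2 hφ, (c.mapOp_code φ).symm⟩

theorem globallyDecidableP (hg : Function.Injective g)
    (hKL : ∀ {φ ψ}, PGlobal L (mapOp ι φ) (mapOp ι ψ) ↔ PGlobal K φ ψ)
    (hL : GloballyDecidableP g L) : GloballyDecidableP h K := by
  have code := (primrec_mapOp c.primrec_code).to_comp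
  refine globallyDecidableP_iff.2 ((computablePred_comp (globallyDecidableP_iff.1 hL)
    ((code.comp Computable.fst).pair (code.comp Computable.snd))).of_eq fun ⟨ξ, η⟩ => ⟨?_, ?_⟩)
  · rintro ⟨α, β, hαβ, hξ, hη⟩
    obtain ⟨φ, rfl, rfl⟩ := c.exists_of_mapOp_code_eq hg hξ.symm
    obtain ⟨ψ, rfl, rfl⟩ := c.exists_of_mapOp_code_eq hg hη.symm
    exact ⟨φ, ψ, hKL.1 hαβ, rfl, rfl⟩
  · rintro ⟨φ, ψ, hφψ, rfl, rfl⟩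
    exact ⟨mapOp ι φ, mapOp ι ψ, hKL.2 hφψ, (c.mapOp_code φ).symm, (c.mapOp_code ψ).symm⟩

theorem preimage_surrogate_image (hh : Function.Injective h) :
    mapOp g ⁻¹' (surrogate c.decode Encodable.encode ⁻¹' (mapOp h '' K)) =
      surrogate f (encode g) ⁻¹' K := by
  ext φ
  rw [Set.mem_preimage, Set.mem_preimage, surrogate_mapOp c.decode_apply,
    (mapOp_injective hh).mem_set_image, Set.mem_preimage]

theorem onFun_surrogate_map (hh : Function.Injective h) :
    ((Relation.Map (PGlobal K) (mapOp h) (mapOp h) on surrogate c.decode Encodable.encode) on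
      mapOp g) = (PGlobal K on surrogate f (encode g)) := by
  funext φ ψ
  simp only [Function.onFun, surrogate_mapOp c.decode_apply]
  exact propext (Relation.map_apply_apply (mapOp_injective hh) (mapOp_injective hh) _ _ _)

end InclusionCode

theorem primrecPred_mod_two_eq (i : ℕ) : PrimrecPred fun k : ℕ => k % 2 = i :=
  Primrec.eq.comp (Primrec.nat_mod.comp Primrec.id (Primrec.const 2)) (Primrec.const i)

section Components

variable {M1 M2 : Type} (e1 : M1 → ℕ) (e2 : M2 → ℕ)

/-- The inclusion of the signature of the left component, on numbers of operators. -/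
def leftCode : InclusionCode (eOpt e1) (eOptSum e1 e2) (Option.map Sum.inl) leftOp where
  code k := 2 * k - 1
  decode k := if k = 0 ∨ k % 2 = 1 then some ((k + 1) / 2) else none
  isPartialInv_code j k := by dsimp only; split_ifs <;> simp <;> omega
  code_apply := by rintro (_ | m) <;> simp [eOpt, eOptSum]; omega
  decode_apply := by rintro (_ | m | m) <;> simp [eOpt, eOptSum, leftOp]; omega
  primrec_code := Primrec.nat_sub.comp (Primrec.nat_mul.comp (Primrec.const 2) Primrec.id)
    (Primrec.const 1)
  primrec_decode := .ite
    ((Primrec.eq.comp Primrec.id (Primrec.const 0)).or (primrecPred_mod_two_eq 1))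
    (Primrec.option_some.comp (Primrec.nat_div.comp Primrec.succ (Primrec.const 2)))
    (Primrec.const none)

/-- The inclusion of the signature of the right component, on numbers of operators. -/
def rightCode : InclusionCode (eOpt e2) (eOptSum e1 e2) (Option.map Sum.inr) rightOp where
  code k := 2 * k
  decode k := if k % 2 = 0 then some (k / 2) else none
  isPartialInv_code j k := by dsimp only; split_ifs <;> simp <;> omega
  code_apply := by rintro (_ | m) <;> simp [eOpt, eOptSum]; omega
  decode_apply := by rintro (_ | m | m) <;> simp [eOpt, eOptSum, rightOp]
  primrec_code := Primrec.nat_mul.comp (Primrec.const 2) Primrec.id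
  primrec_decode := .ite (primrecPred_mod_two_eq 0)
    (Primrec.option_some.comp (Primrec.nat_div.comp Primrec.id (Primrec.const 2)))
    (Primrec.const none)

variable {e1 e2}

theorem mem_range_eOptSum_iff {k : ℕ} : k ∈ Set.range (eOptSum e1 e2) ↔
    (∃ j ∈ (leftCode e1 e2).decode k, j ∈ Set.range (eOpt e1)) ∨
      ∃ j ∈ (rightCode e1 e2).decode k, j ∈ Set.range (eOpt e2) := by
  refine ⟨?_, fun h => h.elim (leftCode e1 e2).mem_range_of_decode
    (rightCode e1 e2).mem_range_of_decode⟩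
  rintro ⟨a, rfl⟩
  simp only [InclusionCode.decode_apply, Option.mem_map, exists_exists_and_eq_and,
    Set.mem_range_self, and_true]
  rcases a with _ | m | m
  exacts [.inl ⟨none, rfl⟩, .inl ⟨some m, rfl⟩, .inr ⟨some m, rfl⟩]

theorem computablePred_mem_range_mapOp_eOptSum
    (h1 : ComputablePred (· ∈ Set.range (eOpt e1)))
    (h2 : ComputablePred (· ∈ Set.range (eOpt e2))) :
    ComputablePred (· ∈ Set.range (mapOp (eOptSum e1 e2))) := by
  have operator : ComputablePred (· ∈ Set.range (eOptSum e1 e2)) :=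
    (computablePred_or
      (computablePred_exists_mem_option h1 (leftCode e1 e2).primrec_decode.to_comp)
      (computablePred_exists_mem_option h2 (rightCode e1 e2).primrec_decode.to_comp)).of_eq
    fun _ => mem_range_eOptSum_iff.symm
  exact (computablePred_forall_mem (computablePred_comp operator Computable.snd)
    primrec_operators.to_comp).of_eq fun _ => mem_range_mapOp_iff.symm

end Components

theorem DecidableP.computablePred_mem_range {M : Type} {e : M → ℕ} {L : Set (PF M)}
    (h : DecidableP e L) (hL : IsPLogic L) : ComputablePred (· ∈ Set.range e) := by
  have box_atom : Primrec fun k : ℕ => PF.box k (.atom 0) :=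
    primrec_box.comp Primrec.id (Primrec.const _)
  refine (computablePred_comp (decidableP_iff.1 h)
    (primrec_imp.comp box_atom box_atom).to_comp).of_eq fun k => ⟨?_, ?_⟩
  · rintro ⟨φ, -, hφ⟩
    exact mem_range_mapOp_iff.1 ⟨φ, hφ⟩ k List.mem_cons_self
  · rintro ⟨m, rfl⟩
    exact ⟨imp (box m (atom 0)) (box m (atom 0)), hL.taut _ (isTaut_imp_self _), rfl⟩

theorem GloballyDecidableP.decidableP {M : Type} {e : M → ℕ} (he : Function.Injective e)
    {L : Set (PF M)} (hL : IsPLogic L) (h : GloballyDecidableP e L) : DecidableP e L := by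
  refine decidableP_iff.2 ((computablePred_comp (globallyDecidableP_iff.1 h)
    ((Computable.const top).pair Computable.id)).of_eq fun ξ => ⟨?_, ?_⟩)
  · rintro ⟨α, ψ, hψ, hα, rfl⟩
    obtain rfl : α = top := mapOp_injective he hα
    exact ⟨ψ, (PGlobal.top_iff hL).1 hψ, rfl⟩
  · rintro ⟨ψ, hψ, rfl⟩
    exact ⟨top, ψ, (PGlobal.top_iff hL).2 hψ, rfl, rfl⟩

section Certificates

variable (e : ℕ)

theorem primrec_hereditary_someCover : Primrec fun p : (PF ℕ × List (List (PF ℕ))) × ℕ =>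
    hereditary e (operators p.1.1) (someCover e p.1.2) p.2 :=
  (primrec_hereditary e).comp <| .pair
    (.pair (primrec_operators.comp (Primrec.fst.comp Primrec.fst))
      (primrec_someCover.comp (Primrec.const e) (Primrec.snd.comp Primrec.fst)))
    Primrec.snd

theorem computablePred_coversConsistent {Θ : Set (PF ℕ)} (hΘ : ComputablePred (· ∈ Θ)) :
    ComputablePred fun p : PF ℕ × List (List (PF ℕ)) => CoversConsistent e Θ p.1 p.2 := by
  have query : Primrec fun q : ((PF ℕ × List (List (PF ℕ))) × ℕ) × List (PF ℕ) =>
      imp (hereditary e (operators q.1.1.1) (someCover e q.1.1.2) (q.1.2 + 1))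
        (neg (cover e q.2)) :=
    primrec_imp.comp
      ((primrec_hereditary_someCover e).comp ((Primrec.fst.comp Primrec.fst).pair
        (Primrec.succ.comp (Primrec.snd.comp Primrec.fst))))
      (primrec_neg.comp (primrec_cover.comp (Primrec.const e) Primrec.snd))
  have covers : ComputablePred fun q : (PF ℕ × List (List (PF ℕ))) × ℕ => ∀ x ∈ q.1.2,
      imp (hereditary e (operators q.1.1) (someCover e q.1.2) (q.2 + 1)) (neg (cover e x)) ∉ Θ :=
    computablePred_forall_mem
      (p := fun (q : (PF ℕ × List (List (PF ℕ))) × ℕ) x =>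
        imp (hereditary e (operators q.1.1) (someCover e q.1.2) (q.2 + 1)) (neg (cover e x)) ∉ Θ)
      (computablePred_comp hΘ query.to_comp).not (Computable.snd.comp Computable.fst)
  refine (computablePred_forall_mem (l := fun p => List.range (subformulas p.1).length)
    (p := fun p n => ∀ x ∈ p.2,
      imp (hereditary e (operators p.1) (someCover e p.2) (n + 1)) (neg (cover e x)) ∉ Θ) covers
    (Primrec.list_range.comp (Primrec.list_length.comp
      (primrec_subformulas.comp Primrec.fst))).to_comp).of_eq fun p => ?_
  simp only [List.mem_range, CoversConsistent]

theorem computablePred_isLocalCertificate {Θ1 Θ2 : Set (PF ℕ)} (h1 : ComputablePred (· ∈ Θ1))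
    (h2 : ComputablePred (· ∈ Θ2)) : ComputablePred fun p : PF ℕ × List (List (PF ℕ)) =>
      IsLocalCertificate e Θ1 Θ2 p.1 p.2 := by
  have query : Primrec fun p : PF ℕ × List (List (PF ℕ)) =>
      imp (hereditary e (operators p.1) (someCover e p.2) (subformulas p.1).length) p.1 :=
    primrec_imp.comp
      ((primrec_hereditary_someCover e).comp (Primrec.id.pair
        (Primrec.list_length.comp (primrec_subformulas.comp Primrec.fst))))
      Primrec.fst
  exact computablePred_and (computablePred_coversConsistent e h1)
    (computablePred_and (computablePred_coversConsistent e h2)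
      (computablePred_comp h1 query.to_comp).not)

theorem computablePred_isGlobalCertificate {Γ1 Γ2 : PF ℕ → PF ℕ → Prop}
    (h1 : ComputablePred fun p : PF ℕ × PF ℕ => Γ1 p.1 p.2)
    (h2 : ComputablePred fun p : PF ℕ × PF ℕ => Γ2 p.1 p.2) :
    ComputablePred fun p : (PF ℕ × PF ℕ) × List (List (PF ℕ)) =>
      IsGlobalCertificate e Γ1 Γ2 p.1.1 p.1.2 p.2 := by
  have prem : Primrec fun p : (PF ℕ × PF ℕ) × List (List (PF ℕ)) =>
      and (someCover e p.2) p.1.1 :=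
    primrec_and.comp (primrec_someCover.comp (Primrec.const e) Primrec.snd)
      (Primrec.fst.comp Primrec.fst)
  have notCover : Primrec fun q : ((PF ℕ × PF ℕ) × List (List (PF ℕ))) × List (PF ℕ) =>
      neg (cover e q.2) :=
    primrec_neg.comp (primrec_cover.comp (Primrec.const e) Primrec.snd)
  have covers {Γ : PF ℕ → PF ℕ → Prop}
      (h : ComputablePred fun p : PF ℕ × PF ℕ => Γ p.1 p.2) :
      ComputablePred fun p : (PF ℕ × PF ℕ) × List (List (PF ℕ)) =>
        ∀ x ∈ p.2, ¬ Γ (and (someCover e p.2) p.1.1) (neg (cover e x)) :=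
    computablePred_forall_mem
      (computablePred_comp h ((prem.comp Primrec.fst).pair notCover).to_comp).not Computable.snd
  exact computablePred_and (covers h1) (computablePred_and (covers h2)
    (computablePred_comp h1 (prem.pair (Primrec.snd.comp Primrec.fst)).to_comp).not)

theorem computablePred_onFun_surrogate {Γ : PF ℕ → PF ℕ → Prop}
    (h : ComputablePred fun p : PF ℕ × PF ℕ => Γ p.1 p.2) {f : ℕ → Option ℕ} (hf : Primrec f) :
    ComputablePred fun p : PF ℕ × PF ℕ => (Γ on surrogate f Encodable.encode) p.1 p.2 :=
  have hs := primrec_surrogate hf Primrec.encode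
  computablePred_comp h ((hs.comp Primrec.fst).pair (hs.comp Primrec.snd)).to_comp

end Certificates

section Fusion

variable {M1 M2 : Type} {d : DSem} {L1 : Set (PF M1)} {L2 : Set (PF M2)} {e1 : M1 → ℕ}
  {e2 : M2 → ℕ} (he1 : Function.Injective e1) (he2 : Function.Injective e2)
include he1 he2

theorem mem_image_mapOp_fusionE_iff (hbot1 : bot ∉ LS5 d L1) (hbot2 : bot ∉ LS5 d L2)
    (hK1 : KComplete (LS5 d L1)) (hK2 : KComplete (LS5 d L2)) {ξ : PF ℕ} :
    ξ ∈ mapOp (eOptSum e1 e2) '' fusionE (LS5 d L1) (LS5 d L2) ↔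
      ξ ∈ Set.range (mapOp (eOptSum e1 e2)) ∧
        ¬ ∃ xs ∈ coverLists (subformulas ξ), IsLocalCertificate 0
          (surrogate (leftCode e1 e2).decode Encodable.encode ⁻¹' (mapOp (eOpt e1) '' LS5 d L1))
          (surrogate (rightCode e1 e2).decode Encodable.encode ⁻¹' (mapOp (eOpt e2) '' LS5 d L2))
          ξ xs := by
  by_cases hξ : ξ ∈ Set.range (mapOp (eOptSum e1 e2))
  · obtain ⟨φ, rfl⟩ := id hξ
    have he := eOptSum_injective he1 he2
    rw [(mapOp_injective he).mem_set_image, and_iff_right hξ, iff_not_comm, iff_comm,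
      notMem_fusionE_iff (encode_injective he) hbot1 hbot2 hK1 hK2, subformulas_mapOp,
      coverLists_map_mapOp]
    simp only [List.mem_map, exists_exists_and_eq_and]
    refine exists_congr fun xs => and_congr_right fun _ => ?_
    rw [← (leftCode e1 e2).preimage_surrogate_image (eOpt_injective he1),
      ← (rightCode e1 e2).preimage_surrogate_image (eOpt_injective he2)]
    exact (isLocalCertificate_mapOp_iff (e := none)).symm
  · exact iff_of_false (fun h => hξ (Set.image_subset_range _ _ h)) fun h => hξ h.1

theorem map_pGlobal_fusionE_iff (hK1 : GloballyKComplete (LS5 d L1))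
    (hK2 : GloballyKComplete (LS5 d L2)) {ξ η : PF ℕ} :
    Relation.Map (PGlobal (fusionE (LS5 d L1) (LS5 d L2)))
        (mapOp (eOptSum e1 e2)) (mapOp (eOptSum e1 e2)) ξ η ↔
      (ξ ∈ Set.range (mapOp (eOptSum e1 e2)) ∧ η ∈ Set.range (mapOp (eOptSum e1 e2))) ∧
        ¬ ∃ xs ∈ coverLists (subformulas ξ ++ subformulas η), IsGlobalCertificate 0
          (Relation.Map (PGlobal (LS5 d L1)) (mapOp (eOpt e1)) (mapOp (eOpt e1)) on
            surrogate (leftCode e1 e2).decode Encodable.encode)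
          (Relation.Map (PGlobal (LS5 d L2)) (mapOp (eOpt e2)) (mapOp (eOpt e2)) on
            surrogate (rightCode e1 e2).decode Encodable.encode) ξ η xs := by
  by_cases hr : ξ ∈ Set.range (mapOp (eOptSum e1 e2)) ∧ η ∈ Set.range (mapOp (eOptSum e1 e2))
  · obtain ⟨⟨φ, rfl⟩, ψ, rfl⟩ := id hr
    have he := eOptSum_injective he1 he2
    rw [Relation.map_apply_apply (mapOp_injective he) (mapOp_injective he), and_iff_right hr,
      iff_not_comm, iff_comm, not_pGlobal_fusionE_iff (encode_injective he) hK1 hK2,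
      subformulas_mapOp, subformulas_mapOp, ← List.map_append, coverLists_map_mapOp]
    simp only [List.mem_map, exists_exists_and_eq_and]
    refine exists_congr fun xs => and_congr_right fun _ => ?_
    rw [← (leftCode e1 e2).onFun_surrogate_map (eOpt_injective he1),
      ← (rightCode e1 e2).onFun_surrogate_map (eOpt_injective he2)]
    exact (isGlobalCertificate_mapOp_iff (e := none)).symm
  · exact iff_of_false (fun ⟨φ, ψ, _, hφ, hψ⟩ => hr ⟨⟨φ, hφ⟩, ψ, hψ⟩) fun h => hr h.1

theorem decidableP_fusionE (hbot1 : bot ∉ LS5 d L1) (hbot2 : bot ∉ LS5 d L2)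
    (hK1 : KComplete (LS5 d L1)) (hK2 : KComplete (LS5 d L2))
    (hD1 : DecidableP (eOpt e1) (LS5 d L1)) (hD2 : DecidableP (eOpt e2) (LS5 d L2)) :
    DecidableP (eOptSum e1 e2) (fusionE (LS5 d L1) (LS5 d L2)) := by
  have range := computablePred_mem_range_mapOp_eOptSum
    (hD1.computablePred_mem_range (isPLogic_LS5 d L1))
    (hD2.computablePred_mem_range (isPLogic_LS5 d L2))
  have left := computablePred_comp (decidableP_iff.1 hD1)
    (primrec_surrogate (leftCode e1 e2).primrec_decode Primrec.encode).to_comp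
  have right := computablePred_comp (decidableP_iff.1 hD2)
    (primrec_surrogate (rightCode e1 e2).primrec_decode Primrec.encode).to_comp
  have refutable := computablePred_exists_mem
    (p := fun ξ xs => IsLocalCertificate 0
      (surrogate (leftCode e1 e2).decode Encodable.encode ⁻¹' (mapOp (eOpt e1) '' LS5 d L1))
      (surrogate (rightCode e1 e2).decode Encodable.encode ⁻¹' (mapOp (eOpt e2) '' LS5 d L2)) ξ xs)
    (computablePred_isLocalCertificate 0 left right)
    (primrec_coverLists.comp primrec_subformulas).to_comp
  exact decidableP_iff.2 ((computablePred_and range refutable.not).of_eq fun ξ =>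
    (mem_image_mapOp_fusionE_iff he1 he2 hbot1 hbot2 hK1 hK2).symm)

theorem globallyDecidableP_fusionE (hK1 : GloballyKComplete (LS5 d L1))
    (hK2 : GloballyKComplete (LS5 d L2)) (hD1 : GloballyDecidableP (eOpt e1) (LS5 d L1))
    (hD2 : GloballyDecidableP (eOpt e2) (LS5 d L2)) :
    GloballyDecidableP (eOptSum e1 e2) (fusionE (LS5 d L1) (LS5 d L2)) := by
  have logic1 := isPLogic_LS5 d L1
  have logic2 := isPLogic_LS5 d L2
  have range := computablePred_mem_range_mapOp_eOptSum
    ((hD1.decidableP (eOpt_injective he1) logic1).computablePred_mem_range logic1)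
    ((hD2.decidableP (eOpt_injective he2) logic2).computablePred_mem_range logic2)
  have ranges := computablePred_and
    (computablePred_comp range (Computable.fst (α := PF ℕ) (β := PF ℕ)))
    (computablePred_comp range (Computable.snd (α := PF ℕ) (β := PF ℕ)))
  have left := computablePred_onFun_surrogate (globallyDecidableP_iff.1 hD1)
    (leftCode e1 e2).primrec_decode
  have right := computablePred_onFun_surrogate (globallyDecidableP_iff.1 hD2)
    (rightCode e1 e2).primrec_decode
  have refutable := computablePred_exists_mem
    (p := fun (q : PF ℕ × PF ℕ) xs => IsGlobalCertificate 0
      (Relation.Map (PGlobal (LS5 d L1)) (mapOp (eOpt e1)) (mapOp (eOpt e1)) on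
        surrogate (leftCode e1 e2).decode Encodable.encode)
      (Relation.Map (PGlobal (LS5 d L2)) (mapOp (eOpt e2)) (mapOp (eOpt e2)) on
        surrogate (rightCode e1 e2).decode Encodable.encode) q.1 q.2 xs)
    (computablePred_isGlobalCertificate 0 left right)
    (primrec_coverLists.comp (Primrec.list_append.comp (primrec_subformulas.comp Primrec.fst)
      (primrec_subformulas.comp Primrec.snd))).to_comp
  exact globallyDecidableP_iff.2 ((computablePred_and ranges refutable.not).of_eq fun _ =>
    (map_pGlobal_fusionE_iff he1 he2 hK1 hK2).symm)

theorem decidableP_fusionE_iff (hbot1 : bot ∉ LS5 d L1) (hbot2 : bot ∉ LS5 d L2)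
    (hK1 : KComplete (LS5 d L1)) (hK2 : KComplete (LS5 d L2)) :
    DecidableP (eOptSum e1 e2) (fusionE (LS5 d L1) (LS5 d L2)) ↔
      DecidableP (eOpt e1) (LS5 d L1) ∧ DecidableP (eOpt e2) (LS5 d L2) := by
  have he := eOptSum_injective he1 he2
  refine ⟨fun hD => ⟨?_, ?_⟩, fun hD => decidableP_fusionE he1 he2 hbot1 hbot2 hK1 hK2 hD.1 hD.2⟩
  · exact (leftCode e1 e2).decidableP he (mapOp_mem_iff (fun _ => mapOp_inl_mem_fusionE)
      (framesExpand_inl (hK2.exists_frameFor hbot2)) hK1) hD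
  · exact (rightCode e1 e2).decidableP he (mapOp_mem_iff (fun _ => mapOp_inr_mem_fusionE)
      (framesExpand_inr (hK1.exists_frameFor hbot1)) hK2) hD

theorem globallyDecidableP_fusionE_iff (hbot1 : bot ∉ LS5 d L1) (hbot2 : bot ∉ LS5 d L2)
    (hK1 : GloballyKComplete (LS5 d L1)) (hK2 : GloballyKComplete (LS5 d L2)) :
    GloballyDecidableP (eOptSum e1 e2) (fusionE (LS5 d L1) (LS5 d L2)) ↔
      GloballyDecidableP (eOpt e1) (LS5 d L1) ∧ GloballyDecidableP (eOpt e2) (LS5 d L2) := by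
  have he := eOptSum_injective he1 he2
  have frame1 := (hK1.kComplete (isPLogic_LS5 d L1)).exists_frameFor hbot1
  have frame2 := (hK2.kComplete (isPLogic_LS5 d L2)).exists_frameFor hbot2
  refine ⟨fun hD => ⟨?_, ?_⟩, fun hD => globallyDecidableP_fusionE he1 he2 hK1 hK2 hD.1 hD.2⟩
  · exact (leftCode e1 e2).globallyDecidableP he
      (pGlobal_mapOp_iff (fun _ => mapOp_inl_mem_fusionE) (framesExpand_inl frame2) hK1) hD
  · exact (rightCode e1 e2).globallyDecidableP he
      (pGlobal_mapOp_iff (fun _ => mapOp_inr_mem_fusionE) (framesExpand_inr frame1) hK2) hD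

end Fusion

/-- Transfer for (semi)commutators with S5: if `[Lᵢ, S5]^d`
is (globally) Kripke complete for `i = 1,2`, then
`[L1, S5]^d ⊗_E [L2, S5]^d` is (globally) Kripke complete, and it is
(globally) decidable iff both `[Lᵢ, S5]^d` are. -/
theorem commutator_fusion_transfer {M1 M2 : Type} (d : DSem)
    (e1 : M1 → ℕ) (e2 : M2 → ℕ)
    (he1 : Function.Injective e1) (he2 : Function.Injective e2)
    (L1 : Set (PF M1)) (L2 : Set (PF M2))
    (h1 : IsPLogic L1) (h2 : IsPLogic L2)
    (hcon1 : PF.bot ∉ L1) (hcon2 : PF.bot ∉ L2) :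
    (KComplete (LS5 d L1) → KComplete (LS5 d L2) →
      (KComplete (fusionE (LS5 d L1) (LS5 d L2)) ∧
       (DecidableP (eOptSum e1 e2) (fusionE (LS5 d L1) (LS5 d L2)) ↔
         (DecidableP (eOpt e1) (LS5 d L1) ∧ DecidableP (eOpt e2) (LS5 d L2))))) ∧
    (GloballyKComplete (LS5 d L1) → GloballyKComplete (LS5 d L2) →
      (GloballyKComplete (fusionE (LS5 d L1) (LS5 d L2)) ∧
       (GloballyDecidableP (eOptSum e1 e2) (fusionE (LS5 d L1) (LS5 d L2)) ↔
         (GloballyDecidableP (eOpt e1) (LS5 d L1) ∧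
          GloballyDecidableP (eOpt e2) (LS5 d L2))))) := by
  have hbot1 : PF.bot ∉ LS5 d L1 := bot_notMem_LS5 h1 hcon1
  have hbot2 : PF.bot ∉ LS5 d L2 := bot_notMem_LS5 h2 hcon2
  have hc := encode_injective (eOptSum_injective he1 he2)
  exact ⟨fun hK1 hK2 => ⟨kComplete_fusionE hc hbot1 hbot2 hK1 hK2,
      decidableP_fusionE_iff he1 he2 hbot1 hbot2 hK1 hK2⟩,
    fun hK1 hK2 => ⟨globallyKComplete_fusionE hc hK1 hK2,
      globallyDecidableP_fusionE_iff he1 he2 hbot1 hbot2 hK1 hK2⟩⟩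

end PropML
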